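/- arXiv:math/0609774 — 4 statements merged into one kernel-verified Lean document; each statement's English description precedes it below -/
import Mathlib

section
/- Let m ≥ 0 be an integer and let r be a primitive vector with (r,r) = −2 in the even unimodular lattice II_{2,8m+2} = 2U ⊕ mE8(−1). Then the orthogonal complement K_r = {x ∈ II_{2,8m+2} : (x,r) = 0}, with the restricted bilinear form, is isometric to U ⊕ mE8(−1) ⊕ ⟨2⟩. -/
/-- The hyperbolic plane `U`, with Gram matrix `[[0,1],[1,0]]`. -/
def gramU : Matrix (Fin 2) (Fin 2) ℤ := !![0, 1; 1, 0]

/-- The Gram matrix of `E₈(−1)`: the negated Cartan (= Gram) matrix of the `E₈` root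
lattice. -/
def gramE8neg : Matrix (Fin 8) (Fin 8) ℤ := -CartanMatrix.E₈

/-- The Gram matrix of `m` orthogonal copies of `E₈(−1)`. -/
def gramE8copies (m : ℕ) : Matrix (Fin m × Fin 8) (Fin m × Fin 8) ℤ :=
  Matrix.of fun p q => if p.1 = q.1 then gramE8neg p.2 q.2 else 0

/-- Index set for `II_{2,8m+2} = 2U ⊕ mE₈(−1)`. -/
abbrev IdxII (m : ℕ) : Type := (Fin 2 ⊕ Fin 2) ⊕ Fin m × Fin 8

/-- The Gram matrix of the even unimodular lattice `II_{2,8m+2} = 2U ⊕ mE₈(−1)`. -/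
def gramII (m : ℕ) : Matrix (IdxII m) (IdxII m) ℤ :=
  Matrix.fromBlocks (Matrix.fromBlocks gramU 0 0 gramU) 0 0 (gramE8copies m)

/-- Index set for `L_{2d}^{(m)} = 2U ⊕ mE₈(−1) ⊕ ⟨−2d⟩`. -/
abbrev IdxL (m : ℕ) : Type := IdxII m ⊕ Fin 1

/-- The Gram matrix of `L_{2d}^{(m)} = 2U ⊕ mE₈(−1) ⊕ ⟨−2d⟩`. -/
def gramL (m d : ℕ) : Matrix (IdxL m) (IdxL m) ℤ :=
  Matrix.fromBlocks (gramII m) 0 0 !![-(2 * (d : ℤ))]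

/-- The bilinear form on `ι → ℤ` associated to a Gram matrix `G`:
`⟨x, y⟩ = ∑ i j, x i * G i j * y j`. -/
def bilin {ι : Type} [Fintype ι] (G : Matrix ι ι ℤ) (x y : ι → ℤ) : ℤ :=
  ∑ i, ∑ j, x i * G i j * y j

/-- `r` is primitive: `ℚr ∩ L = ℤr`, equivalently `r` is not a nontrivial integer
multiple of a lattice vector. -/
def IsPrim {ι : Type} (r : ι → ℤ) : Prop :=
  ∀ (k : ℤ) (x : ι → ℤ), r = k • x → IsUnit k

/-- `s = div(r)`: the positive generator of the ideal `{(r,l) : l ∈ L} ⊆ ℤ`. -/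
def IsDivisorOf {ι : Type} [Fintype ι] (G : Matrix ι ι ℤ) (r : ι → ℤ) (s : ℤ) : Prop :=
  0 < s ∧ (∀ l : ι → ℤ, s ∣ bilin G r l) ∧ ∃ l : ι → ℤ, bilin G r l = s

/-- Two lattices, given as `ℤ`-modules with `ℤ`-valued bilinear forms, are isometric. -/
def LatIsometric {M N : Type} [AddCommGroup M] [Module ℤ M] [AddCommGroup N] [Module ℤ N]
    (BM : M → M → ℤ) (BN : N → N → ℤ) : Prop :=
  ∃ e : M ≃ₗ[ℤ] N, ∀ x y : M, BN (e x) (e y) = BM x y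

/-- The orthogonal complement `K_r = {x : (x,r) = 0}` of `r`, as a `ℤ`-submodule. -/
def orthC {ι : Type} [Fintype ι] (G : Matrix ι ι ℤ) (r : ι → ℤ) :
    Submodule ℤ (ι → ℤ) where
  carrier := {x | bilin G x r = 0}
  zero_mem' := by simp [bilin]
  add_mem' := by
    intro a b ha hb
    simp only [Set.mem_setOf_eq, bilin, Pi.add_apply, add_mul, Finset.sum_add_distrib] at *
    rw [ha, hb, add_zero]
  smul_mem' := by
    intro c x hx
    simp only [Set.mem_setOf_eq, bilin, Pi.smul_apply, smul_eq_mul, mul_assoc,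
      ← Finset.mul_sum] at *
    rw [hx, mul_zero]

/-- Index set for `K_II^{(m)} = U ⊕ mE₈(−1) ⊕ ⟨2⟩`. -/
abbrev IdxKII (m : ℕ) : Type := (Fin 2 ⊕ Fin m × Fin 8) ⊕ Fin 1

/-- The Gram matrix of `K_II^{(m)} = U ⊕ mE₈(−1) ⊕ ⟨2⟩`. -/
def gramKII (m : ℕ) : Matrix (IdxKII m) (IdxKII m) ℤ :=
  Matrix.fromBlocks (Matrix.fromBlocks gramU 0 0 (gramE8copies m)) 0 0 !![(2 : ℤ)]

section EichlerOrbit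

variable {M : Type} [AddCommGroup M]

/-- The form of `2U ⊕ M` on `ℤ × ℤ × ℤ × ℤ × M`. -/
def eichForm (B : M →ₗ[ℤ] M →ₗ[ℤ] ℤ) (x y : ℤ × ℤ × ℤ × ℤ × M) : ℤ :=
  x.1 * y.2.1 + x.2.1 * y.1 + (x.2.2.1 * y.2.2.2.1 + x.2.2.2.1 * y.2.2.1)
    + B x.2.2.2.2 y.2.2.2.2

/-- Two vectors are in the same orbit of the orthogonal group. -/
def EichRel (B : M →ₗ[ℤ] M →ₗ[ℤ] ℤ) (x y : ℤ × ℤ × ℤ × ℤ × M) : Prop :=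
  ∃ g : (ℤ × ℤ × ℤ × ℤ × M) ≃ₗ[ℤ] (ℤ × ℤ × ℤ × ℤ × M),
    (∀ u v, eichForm B (g u) (g v) = eichForm B u v) ∧ g x = y

theorem EichRel.refl (B : M →ₗ[ℤ] M →ₗ[ℤ] ℤ) (x : ℤ × ℤ × ℤ × ℤ × M) : EichRel B x x :=
  ⟨LinearEquiv.refl ℤ _, fun _ _ => rfl, rfl⟩

theorem EichRel.trans {B : M →ₗ[ℤ] M →ₗ[ℤ] ℤ} {x y z : ℤ × ℤ × ℤ × ℤ × M}
    (h₁ : EichRel B x y) (h₂ : EichRel B y z) : EichRel B x z := by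
  obtain ⟨g, hg, rfl⟩ := h₁
  obtain ⟨k, hk, rfl⟩ := h₂
  exact ⟨g.trans k, fun u v => by simp [hk, hg], rfl⟩

theorem eichRel_swap (B : M →ₗ[ℤ] M →ₗ[ℤ] ℤ) (a b c d : ℤ) (w : M) :
    EichRel B (a, b, c, d, w) (c, d, a, b, w) :=
  ⟨{ toFun := fun x => (x.2.2.1, x.2.2.2.1, x.1, x.2.1, x.2.2.2.2)
     invFun := fun x => (x.2.2.1, x.2.2.2.1, x.1, x.2.1, x.2.2.2.2)
     map_add' := fun _ _ => rfl
     map_smul' := fun _ _ => rfl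
     left_inv := fun _ => rfl
     right_inv := fun _ => rfl },
   fun u v => by simp only [eichForm, LinearEquiv.coe_mk, LinearMap.coe_mk, AddHom.coe_mk]; ring,
   rfl⟩

theorem eichRel_swapab (B : M →ₗ[ℤ] M →ₗ[ℤ] ℤ) (a b c d : ℤ) (w : M) :
    EichRel B (a, b, c, d, w) (b, a, c, d, w) :=
  ⟨{ toFun := fun x => (x.2.1, x.1, x.2.2.1, x.2.2.2.1, x.2.2.2.2)
     invFun := fun x => (x.2.1, x.1, x.2.2.1, x.2.2.2.1, x.2.2.2.2)
     map_add' := fun _ _ => rfl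
     map_smul' := fun _ _ => rfl
     left_inv := fun _ => rfl
     right_inv := fun _ => rfl },
   fun u v => by simp only [eichForm, LinearEquiv.coe_mk, LinearMap.coe_mk, AddHom.coe_mk]; ring,
   rfl⟩

theorem eichRel_swapcd (B : M →ₗ[ℤ] M →ₗ[ℤ] ℤ) (a b c d : ℤ) (w : M) :
    EichRel B (a, b, c, d, w) (a, b, d, c, w) :=
  ((eichRel_swap B _ _ _ _ _).trans (eichRel_swapab B _ _ _ _ _)).trans (eichRel_swap B _ _ _ _ _)

theorem eichRel_neg (B : M →ₗ[ℤ] M →ₗ[ℤ] ℤ) (a b c d : ℤ) (w : M) :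
    EichRel B (a, b, c, d, w) (-a, -b, -c, -d, -w) :=
  ⟨LinearEquiv.neg ℤ, fun u v => by simp [eichForm], rfl⟩

theorem eichRel_shear (B : M →ₗ[ℤ] M →ₗ[ℤ] ℤ) (n a b c d : ℤ) (w : M) :
    EichRel B (a, b, c, d, w) (a, b - n * d, c + n * a, d, w) :=
  ⟨{ toFun := fun x => (x.1, x.2.1 - n * x.2.2.2.1, x.2.2.1 + n * x.1, x.2.2.2.1, x.2.2.2.2)
     invFun := fun x => (x.1, x.2.1 + n * x.2.2.2.1, x.2.2.1 - n * x.1, x.2.2.2.1, x.2.2.2.2)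
     map_add' := fun x y => by ext <;> simp <;> ring
     map_smul' := fun k x => by ext <;> simp <;> ring
     left_inv := fun x => by ext <;> simp
     right_inv := fun x => by ext <;> simp },
   fun u v => by simp only [eichForm, LinearEquiv.coe_mk, LinearMap.coe_mk, AddHom.coe_mk]; ring,
   rfl⟩

theorem eichRel_shear' (B : M →ₗ[ℤ] M →ₗ[ℤ] ℤ) (n a b c d : ℤ) (w : M) :
    EichRel B (a, b, c, d, w) (a, b - n * c, c, d + n * a, w) :=
  ((eichRel_swapcd B _ _ _ _ _).trans (eichRel_shear B n _ _ _ _ _)).trans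
    (eichRel_swapcd B _ _ _ _ _)

theorem eichRel_trans (B : M →ₗ[ℤ] M →ₗ[ℤ] ℤ) (hs : ∀ x y, B x y = B y x)
    (v : M) (q : ℤ) (hq : B v v = 2 * q) (a b c d : ℤ) (w : M) :
    EichRel B (a, b, c, d, w) (a, b, c - B v w - q * d, d, w + d • v) :=
  ⟨{ toFun := fun x => (x.1, x.2.1, x.2.2.1 - B v x.2.2.2.2 - q * x.2.2.2.1, x.2.2.2.1,
        x.2.2.2.2 + x.2.2.2.1 • v)
     invFun := fun x => (x.1, x.2.1, x.2.2.1 + B v x.2.2.2.2 - q * x.2.2.2.1, x.2.2.2.1,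
        x.2.2.2.2 - x.2.2.2.1 • v)
     map_add' := fun x y => by
       ext <;> simp [add_smul]
       · ring
       · abel
     map_smul' := fun k x => by
       ext <;> simp [mul_smul]
       ring
     left_inv := fun x => by
       ext <;> simp [hq]
       ring
     right_inv := fun x => by
       ext <;> simp [hq]
       ring },
   fun u w => by
     simp only [eichForm, LinearEquiv.coe_mk, LinearMap.coe_mk, AddHom.coe_mk, map_add, map_smul,
       LinearMap.add_apply, LinearMap.smul_apply, hq, smul_eq_mul, hs u.2.2.2.2 v]
     ring,
   rfl⟩

/-- Eichler's criterion for vectors of square `-2`. -/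
theorem eichRel_minus_two (B : M →ₗ[ℤ] M →ₗ[ℤ] ℤ) (hs : ∀ x y, B x y = B y x)
    (he : ∀ v, ∃ q, B v v = 2 * q)
    (hu : ∀ (k : ℤ) (w : M), (∀ v, k ∣ B v w) → ∃ w₀, w = k • w₀)
    (r : ℤ × ℤ × ℤ × ℤ × M) (hp : ∀ (k : ℤ) x, r = k • x → IsUnit k)
    (hr : eichForm B r r = -2) : EichRel B r (1, -1, 0, 0, 0) := by
  classical
  -- some element of the orbit has positive first coordinate
  have hpos : ∀ x : ℤ × ℤ × ℤ × ℤ × M, EichRel B r x → x.1 ≠ 0 →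
      ∃ y, EichRel B r y ∧ 0 < y.1 ∧ y.1.natAbs = x.1.natAbs := by
    rintro ⟨a, b, c, d, w⟩ h ha
    rcases lt_or_gt_of_ne ha with h0 | h0
    · exact ⟨_, h.trans (eichRel_neg B _ _ _ _ _), by simpa using h0, by simp⟩
    · exact ⟨_, h, h0, rfl⟩
  have hex : ∃ n : ℕ, 0 < n ∧ ∃ y, EichRel B r y ∧ y.1 = n := by
    have : ∃ x, EichRel B r x ∧ x.1 ≠ 0 := by
      by_contra! hno
      obtain ⟨a, b, c, d, w⟩ := r
      have h0 := EichRel.refl B (a, b, c, d, w)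
      have ha : a = 0 := hno _ h0
      have hb : b = 0 := hno _ (h0.trans (eichRel_swapab B _ _ _ _ _))
      have hc : c = 0 := hno _ (h0.trans (eichRel_swap B _ _ _ _ _))
      have hd : d = 0 :=
        hno _ ((h0.trans (eichRel_swapcd B _ _ _ _ _)).trans (eichRel_swap B _ _ _ _ _))
      subst ha hb hc hd
      have hw : ∀ v, (0 : ℤ) ∣ B v w := by
        intro v
        obtain ⟨q, hq⟩ := he v
        have := hno _ ((h0.trans (eichRel_trans B hs v q hq _ _ _ _ _)).trans
          (eichRel_swap B _ _ _ _ _))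
        simp at this
        simp [this]
      obtain ⟨w₀, hw₀⟩ := hu 0 w hw
      simp at hw₀
      subst hw₀
      simp [eichForm] at hr
    obtain ⟨x, hx, hx0⟩ := this
    obtain ⟨y, hy, hy0, -⟩ := hpos x hx hx0
    exact ⟨y.1.natAbs, by omega, y, hy, by omega⟩
  obtain ⟨hn0, ⟨a, b, c, d, w⟩, hy, hya⟩ := Nat.find_spec hex
  have hmin : ∀ x : ℤ × ℤ × ℤ × ℤ × M, EichRel B r x → 0 ≤ x.1 → x.1 < a → x.1 = 0 := by
    intro x hx h0 hlt
    by_contra hne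
    have := Nat.find_min' hex (m := x.1.natAbs) ⟨by omega, x, hx, by omega⟩
    simp only at hya
    omega
  have ha : 0 < a := by simp only at hya; omega
  clear hya hn0
  clear hpos
  -- divisibility
  have hdc : ∀ b c d w, EichRel B r (a, b, c, d, w) → a ∣ c := by
    intro b c d w h
    have h1 := hmin _ ((h.trans (eichRel_shear B (-(c / a)) _ _ _ _ _)).trans
      (eichRel_swap B _ _ _ _ _))
    have e : c + -(c / a) * a = c % a := by
      have := Int.emod_add_mul_ediv c a
      linarith
    simp only [e] at h1
    exact Int.dvd_of_emod_eq_zero (h1 (Int.emod_nonneg _ ha.ne') (Int.emod_lt_of_pos _ ha))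
  obtain ⟨k, rfl⟩ := hdc _ _ _ _ hy
  have h1 := hy.trans (eichRel_shear B (-k) _ _ _ _ _)
  obtain ⟨l, rfl⟩ := hdc _ _ _ _ (h1.trans (eichRel_swapcd B _ _ _ _ _))
  have h2 := h1.trans (eichRel_shear' B (-l) _ _ _ _ _)
  have e1 : a * k + -k * a = 0 := by ring
  have e2 : a * l + -l * a = 0 := by ring
  rw [e1, e2] at h2
  generalize b - -k * (a * l) - -l * 0 = b' at h2
  have hdb : a ∣ b' := by
    have h3 := ((h2.trans (eichRel_swapab B _ _ _ _ _)).trans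
      (eichRel_shear B 1 _ _ _ _ _)).trans (eichRel_swapab B _ _ _ _ _)
    simp only [mul_zero, sub_zero, one_mul, zero_add] at h3
    exact hdc _ _ _ _ h3
  have hdw : ∀ v, a ∣ B v w := by
    intro v
    obtain ⟨q, hq⟩ := he v
    simpa using hdc _ _ _ _ (h2.trans (eichRel_trans B hs v q hq _ _ _ _ _))
  obtain ⟨w₀, rfl⟩ := hu a w hdw
  obtain ⟨b₀, rfl⟩ := hdb
  have hunit : IsUnit a := by
    obtain ⟨g, -, hg⟩ := h2
    apply hp a (g.symm (1, b₀, 0, 0, w₀))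
    rw [← map_smul, LinearEquiv.eq_symm_apply, hg]
    simp
  have ha1 : a = 1 := by
    rcases Int.isUnit_iff.1 hunit with h | h <;> omega
  subst ha1
  simp only [one_smul, one_mul] at h2
  obtain ⟨q, hq⟩ := he (-w₀)
  have h4 := (((h2.trans (eichRel_swap B _ _ _ _ _)).trans (eichRel_swapcd B _ _ _ _ _)).trans
    (eichRel_trans B hs (-w₀) q hq _ _ _ _ _)).trans
      ((eichRel_swapcd B _ _ _ _ _).trans (eichRel_swap B _ _ _ _ _))
  simp only [one_smul, add_neg_cancel] at h4
  generalize b₀ - (B (-w₀)) w₀ - q * 1 = b₁ at h4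
  have hb1 : b₁ = -1 := by
    obtain ⟨g, hg, hg2⟩ := h4
    have := hg r r
    rw [hr, hg2] at this
    simp [eichForm] at this
    omega
  rwa [hb1] at h4

end EichlerOrbit

theorem gramE8neg_inv : ∃ N : Matrix (Fin 8) (Fin 8) ℤ, N * gramE8neg = 1 := by
  refine ⟨-CartanMatrix.E₈⁻¹, ?_⟩
  rw [gramE8neg, neg_mul_neg, Matrix.nonsing_inv_mul]
  rw [CartanMatrix.E₈_det]
  exact isUnit_one

theorem bilin_E8copies (m : ℕ) (x y : Fin m × Fin 8 → ℤ) :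
    bilin (gramE8copies m) x y
      = ∑ i, bilin gramE8neg (fun k => x (i, k)) (fun k => y (i, k)) := by
  simp only [bilin, gramE8copies, Matrix.of_apply, Fintype.sum_prod_type]
  refine Finset.sum_congr rfl fun i _ => Finset.sum_congr rfl fun k _ => ?_
  rw [Finset.sum_eq_single i]
  · simp
  · intro j _ hj
    simp [Ne.symm hj]
  · simp

theorem bilin_E8neg_even (x : Fin 8 → ℤ) : ∃ q, bilin gramE8neg x x = 2 * q := by
  refine ⟨-(x 0 ^ 2 + x 1 ^ 2 + x 2 ^ 2 + x 3 ^ 2 + x 4 ^ 2 + x 5 ^ 2 + x 6 ^ 2 + x 7 ^ 2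
    - x 0 * x 2 - x 1 * x 3 - x 2 * x 3 - x 3 * x 4 - x 4 * x 5 - x 5 * x 6 - x 6 * x 7), ?_⟩
  simp [bilin, gramE8neg, CartanMatrix.E₈, Fin.sum_univ_eight]
  ring

theorem gramE8neg_symm (i j : Fin 8) : gramE8neg i j = gramE8neg j i := by
  fin_cases i <;> fin_cases j <;> rfl

theorem bilin_E8neg_symm (x y : Fin 8 → ℤ) : bilin gramE8neg x y = bilin gramE8neg y x := by
  simp only [bilin]
  rw [Finset.sum_comm]
  refine Finset.sum_congr rfl fun i _ => Finset.sum_congr rfl fun k _ => ?_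
  rw [gramE8neg_symm]
  ring

theorem bilin_E8copies_dual (m : ℕ) (p : Fin m × Fin 8) :
    ∃ v, ∀ w, bilin (gramE8copies m) v w = w p := by
  obtain ⟨N, hN⟩ := gramE8neg_inv
  refine ⟨fun q => if q.1 = p.1 then N p.2 q.2 else 0, fun w => ?_⟩
  rw [bilin_E8copies, Finset.sum_eq_single p.1]
  · simp only [bilin, if_true]
    rw [Finset.sum_comm]
    simp only [← Finset.sum_mul, ← Matrix.mul_apply, hN]
    simp [Matrix.one_apply]
  · intro j _ hj
    simp [bilin, hj]
  · simp

/-- Coordinates on `II_{2,8m+2}`. -/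
def coordII (m : ℕ) :
    (IdxII m → ℤ) ≃ₗ[ℤ] (ℤ × ℤ × ℤ × ℤ × (Fin m × Fin 8 → ℤ)) where
  toFun x := (x (.inl (.inl 0)), x (.inl (.inl 1)), x (.inl (.inr 0)), x (.inl (.inr 1)),
    fun p => x (.inr p))
  invFun y := Sum.elim (Sum.elim ![y.1, y.2.1] ![y.2.2.1, y.2.2.2.1]) y.2.2.2.2
  map_add' _ _ := rfl
  map_smul' _ _ := rfl
  left_inv x := by
    funext i
    rcases i with (i | i) | i
    · fin_cases i <;> rfl
    · fin_cases i <;> rfl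
    · rfl
  right_inv _ := rfl

/-- The form of `mE₈(−1)` as a bilinear map. -/
noncomputable def formE8 (m : ℕ) :
    (Fin m × Fin 8 → ℤ) →ₗ[ℤ] (Fin m × Fin 8 → ℤ) →ₗ[ℤ] ℤ :=
  Matrix.toBilin' (gramE8copies m)

theorem formE8_apply (m : ℕ) (x y : Fin m × Fin 8 → ℤ) :
    formE8 m x y = bilin (gramE8copies m) x y :=
  Matrix.toBilin'_apply _ _ _

theorem eichForm_coordII (m : ℕ) (x y : IdxII m → ℤ) :
    eichForm (formE8 m) (coordII m x) (coordII m y) = bilin (gramII m) x y := by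
  have h : ∀ z, coordII m z = (z (.inl (.inl 0)), z (.inl (.inl 1)), z (.inl (.inr 0)),
      z (.inl (.inr 1)), fun p => z (.inr p)) := fun _ => rfl
  simp only [eichForm, formE8_apply, h, bilin, gramII, gramU]
  simp [Fintype.sum_sum_type, Fin.sum_univ_two]

theorem bilin_gramKII (m : ℕ) (x y : IdxKII m → ℤ) :
    bilin (gramKII m) x y =
      x (.inl (.inl 0)) * y (.inl (.inl 1)) + x (.inl (.inl 1)) * y (.inl (.inl 0))
      + bilin (gramE8copies m) (fun p => x (.inl (.inr p))) (fun p => y (.inl (.inr p)))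
      + 2 * (x (.inr 0) * y (.inr 0)) := by
  simp only [bilin, gramKII, gramU]
  simp [Fintype.sum_sum_type, Fin.sum_univ_two]
  ring

theorem exists_coord_of_minus_two (m : ℕ) (r : IdxII m → ℤ) (hprim : IsPrim r)
    (hr : bilin (gramII m) r r = -2) :
    ∃ φ : (IdxII m → ℤ) ≃ₗ[ℤ] (ℤ × ℤ × ℤ × ℤ × (Fin m × Fin 8 → ℤ)),
      (∀ x y, eichForm (formE8 m) (φ x) (φ y) = bilin (gramII m) x y) ∧
      φ r = (1, -1, 0, 0, 0) := by
  have key : EichRel (formE8 m) (coordII m r) (1, -1, 0, 0, 0) := by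
    apply eichRel_minus_two
    · intro x y
      simp only [formE8_apply, bilin_E8copies]
      exact Finset.sum_congr rfl fun i _ => bilin_E8neg_symm _ _
    · intro v
      choose q hq using bilin_E8neg_even
      refine ⟨∑ i, q (fun k => v (i, k)), ?_⟩
      simp only [formE8_apply, bilin_E8copies, Finset.mul_sum, hq]
    · intro k w h
      choose v hv using bilin_E8copies_dual m
      have h' : ∀ p, k ∣ w p := fun p => by
        have := h (v p)
        rwa [formE8_apply, hv] at this
      choose w₀ hw₀ using h'
      exact ⟨w₀, funext fun p => by simp [hw₀ p]⟩
    · intro k x hx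
      apply hprim k ((coordII m).symm x)
      rw [← map_smul, LinearEquiv.eq_symm_apply, hx]
    · rw [eichForm_coordII, hr]
  obtain ⟨g, hg, hgr⟩ := key
  exact ⟨(coordII m).trans g, fun x y => by simp [hg, eichForm_coordII], hgr⟩

theorem orthogonal_complement_of_minus_two_vector_in_II
    (m : ℕ) (r : IdxII m → ℤ) (hprim : IsPrim r)
    (hr : bilin (gramII m) r r = -2) :
    LatIsometric
      (fun x y : ↥(orthC (gramII m) r) => bilin (gramII m) (x : IdxII m → ℤ) (y : IdxII m → ℤ))
      (bilin (gramKII m)) := by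
  obtain ⟨φ, hφ, hφr⟩ := exists_coord_of_minus_two m r hprim hr
  have hmem : ∀ x, x ∈ orthC (gramII m) r ↔ (φ x).2.1 = (φ x).1 := by
    intro x
    change bilin (gramII m) x r = 0 ↔ _
    rw [← hφ, hφr]
    simp [eichForm]
    omega
  refine ⟨{
    toFun := fun x => Sum.elim (Sum.elim ![(φ x).2.2.1, (φ x).2.2.2.1] (φ x).2.2.2.2)
      ![(φ x).1]
    invFun := fun y => ⟨φ.symm (y (.inr 0), y (.inr 0), y (.inl (.inl 0)), y (.inl (.inl 1)),
      fun p => y (.inl (.inr p))), by rw [hmem]; simp⟩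
    map_add' := ?_
    map_smul' := ?_
    left_inv := ?_
    right_inv := ?_ }, ?_⟩
  · intro x y
    funext i
    rcases i with (i | i) | i
    · fin_cases i <;> simp
    · simp
    · simp
  · intro k x
    have hk : φ ((k • x : orthC (gramII m) r) : IdxII m → ℤ) = k • φ x := map_smul φ k _
    funext i
    rw [hk]
    rcases i with (i | i) | i
    · fin_cases i <;> simp
    · simp
    · simp
  · intro x
    apply Subtype.ext
    have h := (hmem x).1 x.2
    simp only [LinearEquiv.symm_apply_eq]
    ext <;> simp [h]
  · intro y
    funext i
    rcases i with (i | i) | i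
    · fin_cases i <;> simp
    · simp
    · fin_cases i; simp
  · intro x y
    have hx := (hmem x).1 x.2
    have hy := (hmem y).1 y.2
    refine (bilin_gramKII m _ _).trans ?_
    refine Eq.trans ?_ (hφ x y)
    simp [eichForm, formE8_apply, hx, hy]
    ring
end

section
/- Let m ≥ 0 and d ≥ 1 be integers and let L = L_{2d}^{(m)} = 2U ⊕ mE8(−1) ⊕ ⟨−2d⟩. Let r ∈ L be a primitive vector with (r,r) = −2 and let K_r = {x ∈ L : (x,r) = 0} with the restricted form. If div(r) = 1 then K_r is isometric to K_{2d}^{(m)} = U ⊕ mE8(−1) ⊕ ⟨2⟩ ⊕ ⟨−2d⟩. If div(r) = 2 (so that d ≡ 1 mod 4) then K_r is isometric to N_{2d}^{(m)} = U ⊕ mE8(−1) ⊕ B, where B is the rank 2 lattice with Gram matrix [[2,1],[1,(1−d)/2]]. -/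
/-- Index set for `K_{2d}^{(m)} = U ⊕ mE₈(−1) ⊕ ⟨2⟩ ⊕ ⟨−2d⟩`. -/
abbrev IdxK2d (m : ℕ) : Type := ((Fin 2 ⊕ Fin m × Fin 8) ⊕ Fin 1) ⊕ Fin 1

/-- The Gram matrix of `K_{2d}^{(m)} = U ⊕ mE₈(−1) ⊕ ⟨2⟩ ⊕ ⟨−2d⟩`. -/
def gramK2d (m d : ℕ) : Matrix (IdxK2d m) (IdxK2d m) ℤ :=
  Matrix.fromBlocks
    (Matrix.fromBlocks (Matrix.fromBlocks gramU 0 0 (gramE8copies m)) 0 0 !![(2 : ℤ)])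
    0 0 !![-(2 * (d : ℤ))]

/-- Index set for `N_{2d}^{(m)} = U ⊕ mE₈(−1) ⊕ B`. -/
abbrev IdxN2d (m : ℕ) : Type := (Fin 2 ⊕ Fin m × Fin 8) ⊕ Fin 2

/-- The Gram matrix of `N_{2d}^{(m)} = U ⊕ mE₈(−1) ⊕ B`, where `B` is the rank 2
lattice with Gram matrix `[[2,1],[1,(1−d)/2]]`. -/
def gramN2d (m d : ℕ) : Matrix (IdxN2d m) (IdxN2d m) ℤ :=
  Matrix.fromBlocks (Matrix.fromBlocks gramU 0 0 (gramE8copies m)) 0 0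
    !![2, 1; 1, (1 - (d : ℤ)) / 2]


namespace EichlerAux

section abstract_part

variable {P : Type} [AddCommGroup P] (B : P →ₗ[ℤ] P →ₗ[ℤ] ℤ) (q : P → ℤ)

/-- The form on `U ⊕ U ⊕ P`. -/
def F (x y : ℤ × ℤ × ℤ × ℤ × P) : ℤ :=
  x.1 * y.2.1 + x.2.1 * y.1 + x.2.2.1 * y.2.2.2.1 + x.2.2.2.1 * y.2.2.1
    + B x.2.2.2.2 y.2.2.2.2

/-- `r` and `r'` are in the same orbit. -/
def Rel (r r' : ℤ × ℤ × ℤ × ℤ × P) : Prop :=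
  ∃ e : (ℤ × ℤ × ℤ × ℤ × P) ≃ₗ[ℤ] (ℤ × ℤ × ℤ × ℤ × P),
    (∀ x y, F B (e x) (e y) = F B x y) ∧ e r = r'

theorem Rel.refl (r : ℤ × ℤ × ℤ × ℤ × P) : Rel B r r :=
  ⟨LinearEquiv.refl _ _, fun _ _ => rfl, rfl⟩

theorem Rel.trans {r s t : ℤ × ℤ × ℤ × ℤ × P} (h : Rel B r s) (h' : Rel B s t) : Rel B r t := by
  obtain ⟨e, he, rfl⟩ := h
  obtain ⟨e', he', rfl⟩ := h'
  exact ⟨e.trans e', fun x y => by simp [he, he'], rfl⟩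

theorem rel_swap1 (a b c d : ℤ) (p : P) : Rel B (a, b, c, d, p) (b, a, c, d, p) := by
  refine ⟨{ toFun := fun x => (x.2.1, x.1, x.2.2.1, x.2.2.2.1, x.2.2.2.2)
            invFun := fun x => (x.2.1, x.1, x.2.2.1, x.2.2.2.1, x.2.2.2.2)
            map_add' := fun x y => rfl
            map_smul' := fun k x => rfl
            left_inv := fun x => rfl
            right_inv := fun x => rfl }, ?_, rfl⟩
  intro x y
  simp only [F, LinearEquiv.coe_mk, LinearMap.coe_mk, AddHom.coe_mk]
  ring

theorem rel_swap12 (a b c d : ℤ) (p : P) : Rel B (a, b, c, d, p) (c, d, a, b, p) := by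
  refine ⟨{ toFun := fun x => (x.2.2.1, x.2.2.2.1, x.1, x.2.1, x.2.2.2.2)
            invFun := fun x => (x.2.2.1, x.2.2.2.1, x.1, x.2.1, x.2.2.2.2)
            map_add' := fun x y => rfl
            map_smul' := fun k x => rfl
            left_inv := fun x => rfl
            right_inv := fun x => rfl }, ?_, rfl⟩
  intro x y
  simp only [F, LinearEquiv.coe_mk, LinearMap.coe_mk, AddHom.coe_mk]
  ring

theorem rel_swap2 (a b c d : ℤ) (p : P) : Rel B (a, b, c, d, p) (a, b, d, c, p) :=
  ((rel_swap12 B a b c d p).trans B (rel_swap1 B c d a b p)).trans B (rel_swap12 B d c a b p)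

/-- Add `k a` to `c`. -/
theorem rel_add (k a b c d : ℤ) (p : P) :
    Rel B (a, b, c, d, p) (a, b - k * d, c + k * a, d, p) := by
  refine ⟨{ toFun := fun x =>
              (x.1, x.2.1 - k * x.2.2.2.1, x.2.2.1 + k * x.1, x.2.2.2.1, x.2.2.2.2)
            invFun := fun x =>
              (x.1, x.2.1 + k * x.2.2.2.1, x.2.2.1 - k * x.1, x.2.2.2.1, x.2.2.2.2)
            map_add' := ?_
            map_smul' := ?_
            left_inv := ?_
            right_inv := ?_ }, ?_, rfl⟩
  · rintro ⟨a, b, c, d, p⟩ ⟨a', b', c', d', p'⟩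
    ext <;> simp <;> ring
  · rintro k ⟨a, b, c, d, p⟩
    ext <;> simp <;> ring
  · rintro ⟨a, b, c, d, p⟩
    simp
  · rintro ⟨a, b, c, d, p⟩
    simp
  intro x y
  simp only [F, LinearEquiv.coe_mk, LinearMap.coe_mk, AddHom.coe_mk]
  ring

/-- Eichler transvection. -/
theorem rel_trans (hsymm : ∀ x y, B x y = B y x)
    (hq : ∀ x, B x x = 2 * q x) (w : P) (a b c d : ℤ) (p : P) :
    Rel B (a, b, c, d, p) (a, b - B w p - a * q w, c, d, p + a • w) := by
  refine ⟨{ toFun := fun x =>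
              (x.1, x.2.1 - B w x.2.2.2.2 - x.1 * q w, x.2.2.1, x.2.2.2.1, x.2.2.2.2 + x.1 • w)
            invFun := fun x =>
              (x.1, x.2.1 + B w x.2.2.2.2 - x.1 * q w, x.2.2.1, x.2.2.2.1, x.2.2.2.2 - x.1 • w)
            map_add' := ?_
            map_smul' := ?_
            left_inv := ?_
            right_inv := ?_ }, ?_, rfl⟩
  · rintro ⟨a, b, c, d, p⟩ ⟨a', b', c', d', p'⟩
    simp only [Prod.mk_add_mk, Prod.mk.injEq, map_add, add_smul, true_and]
    refine ⟨by ring, by abel⟩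
  · rintro k ⟨a, b, c, d, p⟩
    simp only [Prod.smul_mk, Prod.mk.injEq, map_smul, smul_eq_mul, RingHom.id_apply, true_and,
      smul_add, mul_smul, and_true]
    ring
  · rintro ⟨a, b, c, d, p⟩
    simp only [Prod.mk.injEq, map_add, map_smul, smul_eq_mul, true_and, hq]
    refine ⟨by ring, by abel⟩
  · rintro ⟨a, b, c, d, p⟩
    simp only [Prod.mk.injEq, map_sub, map_smul, smul_eq_mul, true_and, hq]
    refine ⟨by ring, by abel⟩
  rintro ⟨a, b, c, d, p⟩ ⟨a', b', c', d', p'⟩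
  simp only [F, LinearEquiv.coe_mk, LinearMap.coe_mk, AddHom.coe_mk, map_add, map_smul,
    LinearMap.add_apply, LinearMap.smul_apply, smul_eq_mul, hq, hsymm p w]
  ring

theorem exists_ne (hsymm : ∀ x y, B x y = B y x)
    (hq : ∀ x, B x x = 2 * q x) (r : ℤ × ℤ × ℤ × ℤ × P) (hr : F B r r = -2) :
    ∃ s, Rel B r s ∧ s.1 ≠ 0 := by
  obtain ⟨a, b, c, d, p⟩ := r
  by_cases ha : a = 0
  · subst ha
    by_cases hb : b = 0
    · subst hb
      by_cases hc : c = 0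
      · subst hc
        refine ⟨_, (rel_trans B q hsymm hq p _ _ _ _ _).trans B (rel_swap1 B _ _ _ _ _), ?_⟩
        simp [F] at hr ⊢
        omega
      · exact ⟨_, rel_swap12 B _ _ _ _ _, hc⟩
    · exact ⟨_, rel_swap1 B _ _ _ _ _, hb⟩
  · exact ⟨_, Rel.refl B _, ha⟩

/-- Normal form: first coordinate divides everything. -/
theorem exists_normal (hsymm : ∀ x y, B x y = B y x)
    (hq : ∀ x, B x x = 2 * q x) (r : ℤ × ℤ × ℤ × ℤ × P) (hr : F B r r = -2) :
    ∃ a b p, Rel B r (a, b, 0, 0, p) ∧ a ≠ 0 ∧ a ∣ b ∧ ∀ w, a ∣ B w p := by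
  classical
  have hex : ∃ n : ℕ, ∃ s, Rel B r s ∧ s.1 ≠ 0 ∧ s.1.natAbs = n := by
    obtain ⟨s, h, h'⟩ := exists_ne B q hsymm hq r hr
    exact ⟨_, s, h, h', rfl⟩
  obtain ⟨⟨a, b, c, d, p⟩, hs, ha, hn⟩ := Nat.find_spec hex
  have hmin : ∀ s, Rel B r s → s.1 ≠ 0 → a.natAbs ≤ s.1.natAbs := by
    intro s h h'
    have := Nat.find_min' hex ⟨s, h, h', rfl⟩
    simp only at hn
    omega
  simp only at ha
  have key : ∀ b c d p, Rel B r (a, b, c, d, p) → a ∣ c := by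
    intro b c d p h
    by_contra hc
    have h1 := (h.trans B (rel_add B (-(c / a)) _ _ _ _ _)).trans B (rel_swap12 B _ _ _ _ _)
    have h2 : c + -(c / a) * a = c % a := by
      have := Int.emod_add_mul_ediv c a
      linarith
    rw [h2] at h1
    have h3 : c % a ≠ 0 := fun h => hc (Int.dvd_of_emod_eq_zero h)
    have h4 := hmin _ h1 h3
    have h5 := Int.emod_lt_abs c ha
    have h6 := Int.emod_nonneg c ha
    simp only at h4
    rw [Int.abs_eq_natAbs] at h5
    omega
  obtain ⟨k, rfl⟩ := key _ _ _ _ hs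
  have hs1 := hs.trans B (rel_add B (-k) _ _ _ _ _)
  have e1 : a * k + -k * a = 0 := by ring
  rw [e1] at hs1
  have hs2 := hs1.trans B (rel_swap2 B _ _ _ _ _)
  obtain ⟨l, rfl⟩ := key _ _ _ _ hs2
  have hs3 := hs2.trans B (rel_add B (-l) _ _ _ _ _)
  have e2 : a * l + -l * a = 0 := by ring
  rw [e2] at hs3
  generalize b - -k * (a * l) - -l * 0 = b' at hs3
  refine ⟨a, b', p, hs3, ha, ?_, ?_⟩
  · have h1 := ((hs3.trans B (rel_swap1 B _ _ _ _ _)).trans B (rel_add B 1 _ _ _ _ _)).trans B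
      (rel_swap1 B _ _ _ _ _)
    have := key b' (0 + 1 * b') 0 p (by simpa using h1)
    simpa using this
  · intro w
    have h1 := ((hs3.trans B (rel_swap12 B _ _ _ _ _)).trans B
      (rel_trans B q hsymm hq w _ _ _ _ _)).trans B (rel_swap12 B _ _ _ _ _)
    have := key _ _ _ _ (h1.trans B (rel_swap2 B _ _ _ _ _))
    simpa using this

theorem exists_normal' (hsymm : ∀ x y, B x y = B y x)
    (hq : ∀ x, B x x = 2 * q x) (r : ℤ × ℤ × ℤ × ℤ × P) (hr : F B r r = -2) (D : ℤ) (hD : 0 < D)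
    (hdiv : ∀ l, D ∣ F B r l) (hl : ∃ l, F B r l = D) :
    ∃ b p, Rel B r (D, b, 0, 0, p) ∧ D ∣ b ∧ (∀ w, D ∣ B w p) ∧ D * b + q p = -1 := by
  obtain ⟨a, b, p, h, ha, hb, hw⟩ := exists_normal B q hsymm hq r hr
  have hn : a * b + q p = -1 := by
    obtain ⟨e, he, her⟩ := h
    have := he r r
    rw [her, hr] at this
    simp [F, hq] at this
    linarith
  have h1 : a ∣ D := by
    obtain ⟨l, hl⟩ := hl
    obtain ⟨e, he, her⟩ := h
    rw [← hl, ← he, her]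
    simp only [F, zero_mul, add_zero, hsymm p]
    exact dvd_add (dvd_add (dvd_mul_right _ _) (hb.mul_right _)) (hw _)
  have h2 : D ∣ a := by
    obtain ⟨e, he, her⟩ := h
    have := hdiv (e.symm (0, 1, 0, 0, 0))
    rw [← he, her] at this
    simpa [F] using this
  rcases Int.associated_iff.1 (associated_of_dvd_dvd h1 h2) with h3 | h3
  · subst h3
    exact ⟨b, p, h, hb, hw, hn⟩
  · -- sign: negate the first hyperbolic plane
    subst h3
    refine ⟨-b, p, h.trans B ?_, by simpa using hb, by simpa using hw, by linarith⟩
    refine ⟨{ toFun := fun x => (-x.1, -x.2.1, x.2.2.1, x.2.2.2.1, x.2.2.2.2)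
              invFun := fun x => (-x.1, -x.2.1, x.2.2.1, x.2.2.2.1, x.2.2.2.2)
              map_add' := ?_
              map_smul' := ?_
              left_inv := fun x => by simp
              right_inv := fun x => by simp }, ?_, ?_⟩
    · rintro ⟨a, b, c, d, p⟩ ⟨a', b', c', d', p'⟩
      ext <;> simp <;> ring
    · rintro k ⟨a, b, c, d, p⟩
      ext <;> simp
    · intro x y
      simp only [F, LinearEquiv.coe_mk, LinearMap.coe_mk, AddHom.coe_mk]
      ring
    · simp

theorem rel_div_one (hsymm : ∀ x y, B x y = B y x)
    (hq : ∀ x, B x x = 2 * q x) (r : ℤ × ℤ × ℤ × ℤ × P) (hr : F B r r = -2)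
    (hdiv : ∀ l, 1 ∣ F B r l) (hl : ∃ l, F B r l = 1) :
    Rel B r (1, -1, 0, 0, 0) := by
  obtain ⟨b, p, h, -, -, hn⟩ := exists_normal' B q hsymm hq r hr 1 one_pos hdiv hl
  have h1 := h.trans B (rel_trans B q hsymm hq (-p) _ _ _ _ _)
  have h2 : q (-p) = q p := by
    have h3 := hq (-p)
    have h4 := hq p
    simp at h3
    omega
  have h3 : b - B (-p) p - 1 * q (-p) = -1 := by
    rw [h2]; simp [hq]; omega
  rw [h3] at h1
  simpa using h1

end abstract_part

/-- The transport lemma. -/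
theorem latIso_of {ι κ P : Type} [Fintype ι] [Fintype κ] [AddCommGroup P]
    (B : P →ₗ[ℤ] P →ₗ[ℤ] ℤ)
    (G : Matrix ι ι ℤ) (H : Matrix κ κ ℤ) (r : ι → ℤ) (r0 : ℤ × ℤ × ℤ × ℤ × P)
    (Φ : (ι → ℤ) ≃ₗ[ℤ] (ℤ × ℤ × ℤ × ℤ × P)) (hΦ : ∀ x y, F B (Φ x) (Φ y) = bilin G x y)
    (hrel : Rel B (Φ r) r0)
    (g : (ℤ × ℤ × ℤ × ℤ × P) →ₗ[ℤ] (κ → ℤ)) (h : (κ → ℤ) →ₗ[ℤ] (ℤ × ℤ × ℤ × ℤ × P))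
    (h1 : ∀ n, F B (h n) r0 = 0) (h2 : ∀ n, g (h n) = n)
    (h3 : ∀ v, F B v r0 = 0 → h (g v) = v)
    (h4 : ∀ n n', F B (h n) (h n') = bilin H n n') :
    LatIsometric (fun x y : ↥(orthC G r) => bilin G (x : ι → ℤ) (y : ι → ℤ)) (bilin H) := by
  obtain ⟨e, he, her⟩ := hrel
  have hmem : ∀ x, x ∈ orthC G r ↔ F B (e (Φ x)) r0 = 0 := by
    intro x
    rw [← her, he, hΦ]
    rfl
  refine ⟨{ toFun := fun x => g (e (Φ x))
            invFun := fun n => ⟨Φ.symm (e.symm (h n)), by rw [hmem]; simpa using h1 n⟩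
            map_add' := fun x y => by simp
            map_smul' := fun k x => by
              simp only [Submodule.coe_smul, map_smul, RingHom.id_apply]
            left_inv := fun x => by
              ext1
              have := h3 _ ((hmem _).1 x.2)
              simp [this]
            right_inv := fun n => by simp [h2] }, ?_⟩
  intro x y
  simp only [LinearEquiv.coe_mk, LinearMap.coe_mk, AddHom.coe_mk]
  rw [← h4, h3 _ ((hmem _).1 x.2), h3 _ ((hmem _).1 y.2), he, hΦ]

/-! Concrete lattices. -/

theorem bilin_add_left {ι : Type} [Fintype ι] (G : Matrix ι ι ℤ) (x x' y : ι → ℤ) :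
    bilin G (x + x') y = bilin G x y + bilin G x' y := by
  simp [bilin, add_mul, Finset.sum_add_distrib]

theorem bilin_add_right {ι : Type} [Fintype ι] (G : Matrix ι ι ℤ) (x y y' : ι → ℤ) :
    bilin G x (y + y') = bilin G x y + bilin G x y' := by
  simp [bilin, mul_add, Finset.sum_add_distrib]

theorem bilin_smul_left {ι : Type} [Fintype ι] (G : Matrix ι ι ℤ) (k : ℤ) (x y : ι → ℤ) :
    bilin G (k • x) y = k * bilin G x y := by
  simp [bilin, Finset.mul_sum, mul_assoc]

theorem bilin_smul_right {ι : Type} [Fintype ι] (G : Matrix ι ι ℤ) (k : ℤ) (x y : ι → ℤ) :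
    bilin G x (k • y) = k * bilin G x y := by
  simp only [bilin, Finset.mul_sum, Pi.smul_apply, smul_eq_mul]
  exact Finset.sum_congr rfl fun i _ => Finset.sum_congr rfl fun j _ => by ring

theorem bilin_symm {ι : Type} [Fintype ι] (G : Matrix ι ι ℤ) (hG : ∀ i j, G i j = G j i)
    (x y : ι → ℤ) : bilin G x y = bilin G y x := by
  unfold bilin
  rw [Finset.sum_comm]
  refine Finset.sum_congr rfl fun i _ => Finset.sum_congr rfl fun j _ => ?_
  rw [hG j i]; ring

theorem bilin_copies (m : ℕ) (x y : Fin m × Fin 8 → ℤ) :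
    bilin (gramE8copies m) x y
      = ∑ i, bilin gramE8neg (fun j => x (i, j)) (fun j => y (i, j)) := by
  simp only [bilin, gramE8copies, Fintype.sum_prod_type, Matrix.of_apply]
  refine Finset.sum_congr rfl fun i _ => Finset.sum_congr rfl fun j _ => ?_
  rw [Finset.sum_eq_single i]
  · simp
  · intro k _ hk
    simp [hk.symm]
  · simp

theorem E8_expand (x y : Fin 8 → ℤ) : bilin gramE8neg x y =
    -(2 * (x 0 * y 0 + x 1 * y 1 + x 2 * y 2 + x 3 * y 3 + x 4 * y 4 + x 5 * y 5 + x 6 * y 6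
      + x 7 * y 7)) + (x 0 * y 2 + x 2 * y 0 + x 1 * y 3 + x 3 * y 1 + x 2 * y 3 + x 3 * y 2
      + x 3 * y 4 + x 4 * y 3 + x 4 * y 5 + x 5 * y 4 + x 5 * y 6 + x 6 * y 5
      + x 6 * y 7 + x 7 * y 6) := by
  simp [bilin, gramE8neg, CartanMatrix.E₈, Fin.sum_univ_eight]
  ring

theorem E8_even (x : Fin 8 → ℤ) : (2 : ℤ) ∣ bilin gramE8neg x x := by
  rw [E8_expand]
  refine ⟨-((x 0 * x 0 + x 1 * x 1 + x 2 * x 2 + x 3 * x 3 + x 4 * x 4 + x 5 * x 5 + x 6 * x 6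
      + x 7 * x 7)) + (x 0 * x 2 + x 1 * x 3 + x 2 * x 3
      + x 3 * x 4 + x 4 * x 5 + x 5 * x 6 + x 6 * x 7), by ring⟩

theorem E8_unimod (p : Fin 8 → ℤ) (h : ∀ w, (2 : ℤ) ∣ bilin gramE8neg w p) (j : Fin 8) :
    (2 : ℤ) ∣ p j := by
  have h0 := h (Pi.single 0 1)
  have h1 := h (Pi.single 1 1)
  have h2 := h (Pi.single 2 1)
  have h3 := h (Pi.single 3 1)
  have h4 := h (Pi.single 4 1)
  have h5 := h (Pi.single 5 1)
  have h6 := h (Pi.single 6 1)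
  have h7 := h (Pi.single 7 1)
  rw [E8_expand] at h0 h1 h2 h3 h4 h5 h6 h7
  simp [Pi.single_apply] at h0 h1 h2 h3 h4 h5 h6 h7
  fin_cases j <;> simp <;> omega

theorem E8_symm (m : ℕ) (x y : Fin m × Fin 8 → ℤ) :
    bilin (gramE8copies m) x y = bilin (gramE8copies m) y x := by
  rw [bilin_copies, bilin_copies]
  refine Finset.sum_congr rfl fun i _ => ?_
  rw [E8_expand, E8_expand]; ring

theorem copies_even (m : ℕ) (x : Fin m × Fin 8 → ℤ) :
    (2 : ℤ) ∣ bilin (gramE8copies m) x x := by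
  rw [bilin_copies]
  exact Finset.dvd_sum fun i _ => E8_even _

theorem copies_unimod (m : ℕ) (p : Fin m × Fin 8 → ℤ)
    (h : ∀ w, (2 : ℤ) ∣ bilin (gramE8copies m) w p) : ∃ w, p = (2 : ℤ) • w := by
  have : ∀ i, (2 : ℤ) ∣ p i := by
    rintro ⟨i, j⟩
    refine E8_unimod (fun j => p (i, j)) (fun w => ?_) j
    have := h (fun k => if k.1 = i then w k.2 else 0)
    rw [bilin_copies, Finset.sum_eq_single i] at this
    · simpa using this
    · intro k _ hk
      simp [hk, bilin]
    · simp
  choose w hw using this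
  exact ⟨w, funext fun i => by simp [hw]⟩

/-- `mE₈(-1) ⊕ ⟨-2d⟩`. -/
def B0 (m d : ℕ) : ((Fin m × Fin 8 → ℤ) × ℤ) →ₗ[ℤ] ((Fin m × Fin 8 → ℤ) × ℤ) →ₗ[ℤ] ℤ :=
  LinearMap.mk₂ ℤ (fun x y => bilin (gramE8copies m) x.1 y.1 - 2 * d * x.2 * y.2)
    (fun x x' y => by simp [bilin_add_left]; ring)
    (fun k x y => by
      simp only [Prod.smul_fst, Prod.smul_snd, smul_eq_mul, bilin_smul_left]; ring)
    (fun x y y' => by simp [bilin_add_right]; ring)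
    (fun k x y => by
      simp only [Prod.smul_fst, Prod.smul_snd, smul_eq_mul, bilin_smul_right]; ring)

theorem B0_apply (m d : ℕ) (x y : (Fin m × Fin 8 → ℤ) × ℤ) :
    B0 m d x y = bilin (gramE8copies m) x.1 y.1 - 2 * d * x.2 * y.2 := rfl

/-- The quadratic form of `B0`. -/
def q0 (m d : ℕ) (x : (Fin m × Fin 8 → ℤ) × ℤ) : ℤ :=
  bilin (gramE8copies m) x.1 x.1 / 2 - d * x.2 * x.2

theorem B0_symm (m d : ℕ) (x y) : B0 m d x y = B0 m d y x := by
  rw [B0_apply, B0_apply, E8_symm]; ring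

theorem B0_q0 (m d : ℕ) (x) : B0 m d x x = 2 * q0 m d x := by
  rw [B0_apply, q0, mul_sub, Int.mul_ediv_cancel' (copies_even m _)]; ring

/-- Coordinates on `L`. -/
def Phi (m : ℕ) : (IdxL m → ℤ) ≃ₗ[ℤ] (ℤ × ℤ × ℤ × ℤ × ((Fin m × Fin 8 → ℤ) × ℤ)) where
  toFun x := (x (.inl (.inl (.inl 0))), x (.inl (.inl (.inl 1))), x (.inl (.inl (.inr 0))),
    x (.inl (.inl (.inr 1))), (fun i => x (.inl (.inr i)), x (.inr 0)))
  invFun v := Sum.elim (Sum.elim (Sum.elim ![v.1, v.2.1] ![v.2.2.1, v.2.2.2.1]) v.2.2.2.2.1)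
    ![v.2.2.2.2.2]
  map_add' x y := rfl
  map_smul' k x := rfl
  left_inv x := by
    funext i
    rcases i with ((i | i) | i) | i <;> try fin_cases i
    all_goals rfl
  right_inv v := rfl

theorem bilin_fromBlocks {α β : Type} [Fintype α] [Fintype β] (A : Matrix α α ℤ)
    (D : Matrix β β ℤ) (x y : α ⊕ β → ℤ) :
    bilin (Matrix.fromBlocks A 0 0 D) x y
      = bilin A (fun i => x (.inl i)) (fun i => y (.inl i))
        + bilin D (fun i => x (.inr i)) (fun i => y (.inr i)) := by
  simp [bilin, Fintype.sum_sum_type]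

theorem bilin_U (x y : Fin 2 → ℤ) : bilin gramU x y = x 0 * y 1 + x 1 * y 0 := by
  simp [bilin, gramU, Fin.sum_univ_two]

theorem bilin_two (a b c d : ℤ) (x y : Fin 2 → ℤ) : bilin !![a, b; c, d] x y
    = x 0 * a * y 0 + x 0 * b * y 1 + x 1 * c * y 0 + x 1 * d * y 1 := by
  simp [bilin, Fin.sum_univ_two]; ring

theorem bilin_one (a : ℤ) (x y : Fin 1 → ℤ) : bilin !![a] x y = x 0 * a * y 0 := by
  simp [bilin]

theorem Phi_apply (m : ℕ) (x : IdxL m → ℤ) : Phi m x =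
    (x (.inl (.inl (.inl 0))), x (.inl (.inl (.inl 1))), x (.inl (.inl (.inr 0))),
      x (.inl (.inl (.inr 1))), (fun i => x (.inl (.inr i)), x (.inr 0))) := rfl

theorem Phi_isom (m d : ℕ) (x y) : F (B0 m d) (Phi m x) (Phi m y) = bilin (gramL m d) x y := by
  simp only [gramL, gramII, bilin_fromBlocks, bilin_U, bilin_one, F, B0_apply, Phi_apply]
  ring

theorem rel_div_two (m d : ℕ) (r) (hr : F (B0 m d) r r = -2)
    (hdiv : ∀ l, 2 ∣ F (B0 m d) r l) (hl : ∃ l, F (B0 m d) r l = 2) :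
    ∃ β : ℤ, (d : ℤ) = 4 * β + 1 ∧ Rel (B0 m d) r (2, 2 * β, 0, 0, (0, 1)) := by
  have hs := B0_symm m d
  have hq := B0_q0 m d
  obtain ⟨b, ⟨p, c⟩, h, ⟨b', hb⟩, hw, hn⟩ := exists_normal' _ _ hs hq r hr 2 two_pos hdiv hl
  obtain ⟨w, rfl⟩ := copies_unimod m p (fun w => by simpa [B0_apply] using hw (w, 0))
  have hc : c % 2 = 1 := by
    by_contra hc
    obtain ⟨k, rfl⟩ : (2 : ℤ) ∣ c := by omega
    obtain ⟨z, hz⟩ := copies_even m w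
    simp only [q0, bilin_smul_left, bilin_smul_right, hz] at hn
    have e : (2 : ℤ) * (2 * (2 * z)) / 2 = 4 * z := by omega
    rw [e] at hn
    have : 2 * (b + 2 * z - 2 * d * k * k) = -1 := by linarith
    omega
  obtain ⟨k, rfl⟩ : ∃ k, c = 2 * k + 1 := ⟨c / 2, by omega⟩
  have h1 := h.trans _ (rel_trans _ _ hs hq (-w, -k) _ _ _ _ _)
  have e1 : (((2 : ℤ) • w, 2 * k + 1) : (Fin m × Fin 8 → ℤ) × ℤ) + (2 : ℤ) • (-w, -k) = (0, 1) := by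
    ext <;> simp
  rw [e1] at h1
  have hb2 : (2 : ℤ) ∣ b - B0 m d (-w, -k) ((2 : ℤ) • w, 2 * k + 1) - 2 * q0 m d (-w, -k) :=
    dvd_sub (dvd_sub ⟨b', hb⟩ (hw _)) (dvd_mul_right _ _)
  obtain ⟨β, hβ⟩ := hb2
  rw [hβ] at h1
  refine ⟨β, ?_, h1⟩
  obtain ⟨e, he, her⟩ := h1
  have := he r r
  rw [her, hr] at this
  simp [F, B0_apply, bilin] at this
  linarith

end EichlerAux

open EichlerAux

/-- Let `r` be a primitive vector with `(r,r) = −2` in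
`L = L_{2d}^{(m)}` and let `K_r` be its orthogonal complement with the restricted form.
If `div(r) = 1` then `K_r ≅ K_{2d}^{(m)} = U ⊕ mE₈(−1) ⊕ ⟨2⟩ ⊕ ⟨−2d⟩`, and if
`div(r) = 2` (so that `d ≡ 1 mod 4`) then `K_r ≅ N_{2d}^{(m)} = U ⊕ mE₈(−1) ⊕ B`
with `B = [[2,1],[1,(1−d)/2]]`. -/
theorem orthogonal_complement_of_minus_two_vector_in_L2d
    (m d : ℕ) (hd : 1 ≤ d) (r : IdxL m → ℤ) (hprim : IsPrim r)
    (hr : bilin (gramL m d) r r = -2) :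
    (IsDivisorOf (gramL m d) r 1 →
      LatIsometric
        (fun x y : ↥(orthC (gramL m d) r) =>
          bilin (gramL m d) (x : IdxL m → ℤ) (y : IdxL m → ℤ))
        (bilin (gramK2d m d))) ∧
    (IsDivisorOf (gramL m d) r 2 →
      LatIsometric
        (fun x y : ↥(orthC (gramL m d) r) =>
          bilin (gramL m d) (x : IdxL m → ℤ) (y : IdxL m → ℤ))
        (bilin (gramN2d m d))) := by
  have key : ∀ s : ℤ, IsDivisorOf (gramL m d) r s → 
      (∀ l, s ∣ F (B0 m d) (Phi m r) l) ∧ (∃ l, F (B0 m d) (Phi m r) l = s) := by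
    rintro s ⟨-, h1, l, h2⟩
    refine ⟨fun l => ?_, Phi m l, by rw [Phi_isom, h2]⟩
    have := h1 ((Phi m).symm l)
    rwa [← Phi_isom, LinearEquiv.apply_symm_apply] at this
  have hr' : F (B0 m d) (Phi m r) (Phi m r) = -2 := by rw [Phi_isom, hr]
  constructor
  · intro h
    obtain ⟨h1, h2⟩ := key 1 h
    have hrel := rel_div_one _ _ (B0_symm m d) (B0_q0 m d) _ hr' h1 h2
    refine latIso_of (B0 m d) _ _ r _ (Phi m) (Phi_isom m d) hrel
      { toFun := fun v => Sum.elim (Sum.elim (Sum.elim ![v.2.2.1, v.2.2.2.1] v.2.2.2.2.1) ![v.1])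
          ![v.2.2.2.2.2]
        map_add' := ?_
        map_smul' := ?_ }
      { toFun := fun n => (n (.inl (.inr 0)), n (.inl (.inr 0)), n (.inl (.inl (.inl 0))),
          n (.inl (.inl (.inl 1))), (fun i => n (.inl (.inl (.inr i))), n (.inr 0)))
        map_add' := fun x y => rfl
        map_smul' := fun k x => rfl } ?_ ?_ ?_ ?_
    · intro x y
      funext i
      rcases i with ((i | i) | i) | i <;> try fin_cases i
      all_goals rfl
    · intro k x
      funext i
      rcases i with ((i | i) | i) | i <;> try fin_cases i
      all_goals rfl
    · intro n
      simp [F]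
    · intro n
      funext i
      rcases i with ((i | i) | i) | i <;> try fin_cases i
      all_goals rfl
    · rintro ⟨a, b, c, e, p, z⟩ hv
      simp [F] at hv
      have : a = b := by omega
      subst this
      rfl
    · intro n n'
      simp only [gramK2d, bilin_fromBlocks, bilin_U, bilin_one, F, B0_apply,
        LinearMap.coe_mk, AddHom.coe_mk]
      ring
  · intro h
    obtain ⟨h1, h2⟩ := key 2 h
    obtain ⟨β, hβ, hrel⟩ := rel_div_two m d _ hr' h1 h2
    refine latIso_of (B0 m d) _ _ r _ (Phi m) (Phi_isom m d) hrel
      { toFun := fun v => Sum.elim (Sum.elim ![v.2.2.1, v.2.2.2.1] v.2.2.2.2.1)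
          ![v.2.2.2.2.2, v.1 - 2 * v.2.2.2.2.2]
        map_add' := ?_
        map_smul' := ?_ }
      { toFun := fun n => (2 * n (.inr 0) + n (.inr 1),
          d * n (.inr 0) - β * (2 * n (.inr 0) + n (.inr 1)), n (.inl (.inl 0)),
          n (.inl (.inl 1)), (fun i => n (.inl (.inr i)), n (.inr 0)))
        map_add' := ?_
        map_smul' := ?_ } ?_ ?_ ?_ ?_
    · intro x y
      funext i
      rcases i with (i | i) | i <;> try fin_cases i
      all_goals simp
      ring
    · intro k x
      funext i
      rcases i with (i | i) | i <;> try fin_cases i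
      all_goals simp
      ring
    · intro x y
      ext <;> simp <;> ring
    · intro k x
      ext <;> simp <;> ring
    · intro n
      simp [F, B0_apply, bilin]
      ring
    · intro n
      funext i
      rcases i with (i | i) | i <;> try fin_cases i
      all_goals simp
    · rintro ⟨a, b, c, e, p, z⟩ hv
      simp [F, B0_apply, bilin] at hv
      simp
      linarith
    · intro n n'
      have e : (1 - (d : ℤ)) / 2 = -2 * β := by omega
      simp only [gramN2d, bilin_fromBlocks, bilin_U, bilin_two, F, B0_apply,
        LinearMap.coe_mk, AddHom.coe_mk, e]
      rw [hβ]
      ring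
end

section
/- Let m ≥ 0 and d ≥ 1 be integers and let L = L_{2d}^{(m)} = 2U ⊕ mE8(−1) ⊕ ⟨−2d⟩. Let r ∈ L be a primitive vector with (r,r) = −2d and div(r) = d. Then the orthogonal complement K_r = {x ∈ L : (x,r) = 0}, with the restricted form, is isometric either to K_2^{(m)} = U ⊕ mE8(−1) ⊕ ⟨2⟩ ⊕ ⟨−2⟩ or to T_{2,8m+2} = U ⊕ U(2) ⊕ mE8(−1). -/
/-- Index set for `K_2^{(m)} = U ⊕ mE₈(−1) ⊕ ⟨2⟩ ⊕ ⟨−2⟩`. -/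
abbrev IdxK2 (m : ℕ) : Type := ((Fin 2 ⊕ Fin m × Fin 8) ⊕ Fin 1) ⊕ Fin 1

/-- The Gram matrix of `K_2^{(m)} = U ⊕ mE₈(−1) ⊕ ⟨2⟩ ⊕ ⟨−2⟩`. -/
def gramK2 (m : ℕ) : Matrix (IdxK2 m) (IdxK2 m) ℤ :=
  Matrix.fromBlocks
    (Matrix.fromBlocks (Matrix.fromBlocks gramU 0 0 (gramE8copies m)) 0 0 !![(2 : ℤ)])
    0 0 !![(-2 : ℤ)]

/-- The Gram matrix of `U(2)`, i.e. `[[0,2],[2,0]]`. -/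
def gramU2 : Matrix (Fin 2) (Fin 2) ℤ := !![0, 2; 2, 0]

/-- Index set for `T_{2,8m+2} = U ⊕ U(2) ⊕ mE₈(−1)`. -/
abbrev IdxT (m : ℕ) : Type := (Fin 2 ⊕ Fin 2) ⊕ Fin m × Fin 8

/-- The Gram matrix of `T_{2,8m+2} = U ⊕ U(2) ⊕ mE₈(−1)`. -/
def gramT (m : ℕ) : Matrix (IdxT m) (IdxT m) ℤ :=
  Matrix.fromBlocks (Matrix.fromBlocks gramU 0 0 gramU2) 0 0 (gramE8copies m)


namespace OCD

section general
variable {E : Type} [AddCommGroup E]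

/-- coordinates for `2U ⊕ E` -/
abbrev P (E : Type) : Type := ℤ × ℤ × ℤ × ℤ × E

/-- the form of `2U ⊕ E` -/
def F (β : E →ₗ[ℤ] E →ₗ[ℤ] ℤ) (x y : P E) : ℤ :=
  x.1 * y.2.1 + x.2.1 * y.1 + (x.2.2.1 * y.2.2.2.1 + x.2.2.2.1 * y.2.2.1)
    + β x.2.2.2.2 y.2.2.2.2

/-- `w` and `w'` are related by an isometry -/
def Reach (β : E →ₗ[ℤ] E →ₗ[ℤ] ℤ) (w w' : P E) : Prop :=
  ∃ g : P E ≃ₗ[ℤ] P E, (∀ x y, F β (g x) (g y) = F β x y) ∧ g w = w'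

lemma Reach.refl (β : E →ₗ[ℤ] E →ₗ[ℤ] ℤ) (w : P E) : Reach β w w :=
  ⟨LinearEquiv.refl ℤ _, fun _ _ => rfl, rfl⟩

lemma Reach.trans {β : E →ₗ[ℤ] E →ₗ[ℤ] ℤ} {w₁ w₂ w₃ : P E} (h : Reach β w₁ w₂)
    (h' : Reach β w₂ w₃) : Reach β w₁ w₃ := by
  obtain ⟨g, hg, rfl⟩ := h
  obtain ⟨g', hg', rfl⟩ := h'
  exact ⟨g.trans g', fun x y => by simp [hg, hg'], rfl⟩

/-- build a reachability statement from an additive map with an inverse -/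
lemma Reach.of {β : E →ₗ[ℤ] E →ₗ[ℤ] ℤ} (f k : P E → P E)
    (hadd : ∀ x y, f (x + y) = f x + f y) (h1 : ∀ x, k (f x) = x) (h2 : ∀ x, f (k x) = x)
    (hF : ∀ x y, F β (f x) (f y) = F β x y) (w : P E) : Reach β w (f w) := by
  let fe : P E ≃+ P E := { toFun := f, invFun := k, left_inv := h1, right_inv := h2, map_add' := hadd }
  exact ⟨fe.toIntLinearEquiv, hF, rfl⟩

lemma reach_swap₁ (β : E →ₗ[ℤ] E →ₗ[ℤ] ℤ) (a b c d : ℤ) (v : E) :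
    Reach β (a, b, c, d, v) (b, a, c, d, v) :=
  Reach.of (fun w => (w.2.1, w.1, w.2.2)) (fun w => (w.2.1, w.1, w.2.2))
    (fun _ _ => rfl) (fun _ => rfl) (fun _ => rfl) (fun x y => by simp only [F]; ring) _

lemma reach_swap₂ (β : E →ₗ[ℤ] E →ₗ[ℤ] ℤ) (a b c d : ℤ) (v : E) :
    Reach β (a, b, c, d, v) (a, b, d, c, v) :=
  Reach.of (fun w => (w.1, w.2.1, w.2.2.2.1, w.2.2.1, w.2.2.2.2))
    (fun w => (w.1, w.2.1, w.2.2.2.1, w.2.2.1, w.2.2.2.2))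
    (fun _ _ => rfl) (fun _ => rfl) (fun _ => rfl) (fun x y => by simp only [F]; ring) _

lemma reach_swap₃ (β : E →ₗ[ℤ] E →ₗ[ℤ] ℤ) (a b c d : ℤ) (v : E) :
    Reach β (a, b, c, d, v) (c, d, a, b, v) :=
  Reach.of (fun w => (w.2.2.1, w.2.2.2.1, w.1, w.2.1, w.2.2.2.2))
    (fun w => (w.2.2.1, w.2.2.2.1, w.1, w.2.1, w.2.2.2.2))
    (fun _ _ => rfl) (fun _ => rfl) (fun _ => rfl) (fun x y => by simp only [F]; ring) _

/-- Eichler transvection -/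
lemma reach_trans (β : E →ₗ[ℤ] E →ₗ[ℤ] ℤ) (hsym : ∀ x y, β x y = β y x)
    (s t : ℤ) (y : E) (q : ℤ) (hq : β y y = 2 * q) (a b c d : ℤ) (v : E) :
    Reach β (a, b, c, d, v)
      (a - (s * d + t * c + β y v) - (s * t + q) * b, b, c + b * s, d + b * t, v + b • y) := by
  refine Reach.of
    (fun w => (w.1 - (s * w.2.2.2.1 + t * w.2.2.1 + β y w.2.2.2.2) - (s * t + q) * w.2.1, w.2.1,
      w.2.2.1 + w.2.1 * s, w.2.2.2.1 + w.2.1 * t, w.2.2.2.2 + w.2.1 • y))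
    (fun w => (w.1 + (s * w.2.2.2.1 + t * w.2.2.1 + β y w.2.2.2.2) - (s * t + q) * w.2.1, w.2.1,
      w.2.2.1 - w.2.1 * s, w.2.2.2.1 - w.2.1 * t, w.2.2.2.2 - w.2.1 • y))
    ?_ ?_ ?_ ?_ (a, b, c, d, v)
  · rintro ⟨a, b, c, d, v⟩ ⟨a', b', c', d', v'⟩
    simp only [Prod.mk_add_mk, Prod.mk.injEq, map_add, add_smul]
    refine ⟨by ring, trivial, by ring, by ring, by abel⟩
  · rintro ⟨a, b, c, d, v⟩
    simp only [Prod.mk.injEq, map_add, map_smul, hq, smul_eq_mul]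
    refine ⟨by ring, trivial, by ring, by ring, by abel⟩
  · rintro ⟨a, b, c, d, v⟩
    simp only [Prod.mk.injEq, map_sub, map_smul, hq, smul_eq_mul]
    refine ⟨by ring, trivial, by ring, by ring, by abel⟩
  · rintro ⟨a, b, c, d, v⟩ ⟨a', b', c', d', v'⟩
    simp only [F, map_add, map_smul, hq, smul_eq_mul, LinearMap.add_apply, LinearMap.smul_apply,
      hsym v y]
    ring

/-- Every nonzero vector of `2U ⊕ E`, `E` even unimodular, can be moved into the first `U`. -/
lemma reach_normal (β : E →ₗ[ℤ] E →ₗ[ℤ] ℤ) (hsym : ∀ x y, β x y = β y x)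
    (hev : ∀ y, ∃ q, β y y = 2 * q)
    (huni : ∀ (b : ℤ) (v : E), (∀ y, b ∣ β y v) → ∃ v', v = b • v')
    (hnd : ∀ v : E, (∀ y, β y v = 0) → v = 0)
    (w : P E) (hw : w ≠ 0) : ∃ a b : ℤ, b ≠ 0 ∧ Reach β w (b * a, b, 0, 0, 0) := by
  classical
  have hex : ∃ n : ℕ, 0 < n ∧ ∃ a b c d v, Reach β w (a, b, c, d, v) ∧ b.natAbs = n := by
    suffices h : ∃ a b c d v, Reach β w (a, b, c, d, v) ∧ b ≠ 0 by
      obtain ⟨a, b, c, d, v, h, hb⟩ := h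
      exact ⟨b.natAbs, Int.natAbs_pos.mpr hb, a, b, c, d, v, h, rfl⟩
    obtain ⟨a, b, c, d, v⟩ := w
    by_cases hb : b = 0
    · by_cases ha : a = 0
      · by_cases hd : d = 0
        · by_cases hc : c = 0
          · have hv : v ≠ 0 := by
              rintro rfl
              exact hw (by simp [ha, hb, hc, hd])
            have : ∃ y, β y v ≠ 0 := by
              by_contra! h
              exact hv (hnd v h)
            obtain ⟨y, hy⟩ := this
            obtain ⟨q, hq⟩ := hev y
            refine ⟨_, _, _, _, _, (reach_trans β hsym 0 0 y q hq a b c d v).trans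
              (reach_swap₁ β _ _ _ _ _), ?_⟩
            subst ha hb hc hd
            simpa using hy
          · exact ⟨_, _, _, _, _, (reach_swap₂ β _ _ _ _ _).trans (reach_swap₃ β _ _ _ _ _), hc⟩
        · exact ⟨_, _, _, _, _, reach_swap₃ β _ _ _ _ _, hd⟩
      · exact ⟨_, _, _, _, _, reach_swap₁ β _ _ _ _ _, ha⟩
    · exact ⟨_, _, _, _, _, Reach.refl β _, hb⟩
  obtain ⟨hn, a, b, c, d, v, hR, hbn⟩ := Nat.find_spec hex
  have hb : b ≠ 0 := by
    rintro rfl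
    rw [← hbn] at hn
    simp at hn
  have hmin : ∀ a' x c' d' v', Reach β w (a', x % b, c', d', v') → b ∣ x := by
    intro a' x c' d' v' h
    by_contra hx
    have hx' : x % b ≠ 0 := fun h => hx (Int.dvd_of_emod_eq_zero h)
    have h1 := Int.emod_nonneg x hb
    have h2 := Int.emod_lt_abs x hb
    have := Nat.find_min' hex ⟨Int.natAbs_pos.mpr hx', _, _, _, _, _, h, rfl⟩
    rw [← hbn] at this
    rw [Int.abs_eq_natAbs] at h2
    omega
  have he : ∀ x : ℤ, x + b * -(x / b) = x % b := fun x => by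
    have := Int.emod_add_mul_ediv x b
    linarith
  -- step 1
  have hR1 := hR.trans (reach_trans β hsym (-(c / b)) (-(d / b)) 0 0 (by simp) a b c d v)
  rw [he, he] at hR1
  have hd := hmin _ _ _ _ _ (hR1.trans (reach_swap₃ β _ _ _ _ _))
  have hc := hmin _ _ _ _ _ ((hR1.trans (reach_swap₂ β _ _ _ _ _)).trans (reach_swap₃ β _ _ _ _ _))
  have hR2 : ∃ a₁, Reach β w (a₁, b, 0, 0, v) := by
    rw [Int.emod_eq_zero_of_dvd hc, Int.emod_eq_zero_of_dvd hd, smul_zero, add_zero v] at hR1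
    exact ⟨_, hR1⟩
  clear hR1
  obtain ⟨a₁, hR1⟩ := hR2
  -- step 2
  have hstep2 : ∀ a v, Reach β w (a, b, 0, 0, v) → b ∣ a := by
    intro a v h
    have h1 := (h.trans (reach_trans β hsym (a / b) 1 0 0 (by simp) a b 0 0 v)).trans
      (reach_swap₁ β _ _ _ _ _)
    have h2 : a - (a / b * 0 + 1 * 0 + (β 0) v) - (a / b * 1 + 0) * b = a % b := by
      rw [← he]; simp; ring
    rw [h2] at h1
    exact hmin _ _ _ _ _ h1
  have ha₁ := hstep2 _ _ hR1
  have hv : ∀ y, b ∣ β y v := by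
    intro y
    obtain ⟨q, hq⟩ := hev y
    have h1 := hR1.trans (reach_trans β hsym 0 0 y q hq _ _ _ _ _)
    simp only [mul_zero, add_zero, zero_add, zero_mul] at h1
    have h2 := hstep2 _ _ h1
    have h3 : β y v = a₁ - (a₁ - β y v - q * b) - q * b := by ring
    rw [h3]
    exact (ha₁.sub h2).sub (Dvd.intro_left q rfl)
  obtain ⟨v', rfl⟩ := huni b v hv
  obtain ⟨q, hq⟩ := hev (-v')
  have h1 := hR1.trans (reach_trans β hsym 0 0 (-v') q hq _ _ _ _ _)
  simp only [mul_zero, add_zero, zero_add, zero_mul, smul_neg, add_neg_cancel] at h1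
  obtain ⟨k, hk⟩ := hstep2 _ _ h1
  rw [hk] at h1
  exact ⟨k, b, hb, h1⟩

end general

/-- Classification of binary forms of determinant `-1`. -/
lemma binary (A C c : ℤ) (h : A * C = c ^ 2 - 1) : ∃ p p' s s' D : ℤ,
    D * D = 1 ∧ p * s' - p' * s = D ∧
    ((-(A * p * p - 2 * c * p * s + C * s * s) = 0 ∧
      -(A * p * p' - c * (p * s' + p' * s) + C * s * s') = 1 ∧
      -(A * p' * p' - 2 * c * p' * s' + C * s' * s') = 0) ∨
     (-(A * p * p - 2 * c * p * s + C * s * s) = 1 ∧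
      -(A * p * p' - c * (p * s' + p' * s) + C * s * s') = 0 ∧
      -(A * p' * p' - 2 * c * p' * s' + C * s' * s') = -1)) := by
  have h1 : ∃ p s : ℤ, IsCoprime p s ∧ A * p * p - 2 * c * p * s + C * s * s = 0 := by
    by_cases hA : A = 0
    · exact ⟨1, 0, isCoprime_one_left, by simp [hA]⟩
    · have hg : (Int.gcd (c + 1) A : ℤ) ≠ 0 := by
        simp [Int.gcd_eq_zero_iff, hA]
      obtain ⟨p, hp⟩ := Int.gcd_dvd_left (c + 1) A
      obtain ⟨s, hs⟩ := Int.gcd_dvd_right (c + 1) A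
      have hbz := Int.gcd_eq_gcd_ab (c + 1) A
      generalize (Int.gcd (c + 1) A : ℤ) = g at *
      refine ⟨p, s, ⟨Int.gcdA (c + 1) A, Int.gcdB (c + 1) A, ?_⟩, ?_⟩
      · apply mul_left_cancel₀ hg
        generalize Int.gcdA (c + 1) A = u at *
        generalize Int.gcdB (c + 1) A = v at *
        linear_combination -hbz - u * hp - v * hs
      · apply mul_left_cancel₀ (mul_ne_zero hg hg)
        have e : g * g * (A * p * p - 2 * c * p * s + C * s * s)
          = A * (g * p) * (g * p) - 2 * c * (g * p) * (g * s) + C * (g * s) * (g * s) := by ring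
        rw [e, ← hp, ← hs]
        linear_combination A * h
  obtain ⟨p, s, ⟨u, v, huv⟩, h0⟩ := h1
  -- complete to a basis with pairing one
  have h2 : ∃ p' s' D : ℤ, D * D = 1 ∧ p * s' - p' * s = D ∧
      -(A * p * p' - c * (p * s' + p' * s) + C * s * s') = 1 := by
    have hsq : (-(A * p * (-v) - c * (p * u + (-v) * s) + C * s * u)) ^ 2 = 1 := by
      have e : (-(A * p * (-v) - c * (p * u + (-v) * s) + C * s * u)) ^ 2
        = (A * p * p - 2 * c * p * s + C * s * s) *
          (A * v * v + 2 * c * v * u + C * u * u)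
          + (c ^ 2 - A * C) * (u * p + v * s) ^ 2 := by ring
      rw [e, h0, huv, h]; ring
    rcases (sq_eq_sq_iff_eq_or_eq_neg.mp (hsq.trans (one_pow 2).symm)) with h3 | h3
    · exact ⟨-v, u, 1, by norm_num, by linear_combination huv, h3⟩
    · exact ⟨v, -u, -1, by norm_num, by linear_combination -huv, by linear_combination -h3⟩
  obtain ⟨p', s', D, hD, hdet, hpair⟩ := h2
  obtain ⟨k, hk⟩ := Int.even_or_odd' (-(A * p' * p' - 2 * c * p' * s' + C * s' * s'))
  rcases hk with hk | hk
  · refine ⟨p, p' - k * p, s, s' - k * s, D, hD, by linear_combination hdet, Or.inl ⟨?_, ?_, ?_⟩⟩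
    · linear_combination -h0
    · linear_combination hpair + k * h0
    · linear_combination hk - 2 * k * hpair - k ^ 2 * h0
  · -- norms 0,1,1 after the shift
    have e1 : -(A * (p' - k * p) * (p' - k * p) - 2 * c * (p' - k * p) * (s' - k * s)
        + C * (s' - k * s) * (s' - k * s)) = 1 := by
      linear_combination hk - 2 * k * hpair - k ^ 2 * h0
    have e2 : -(A * p * (p' - k * p) - c * (p * (s' - k * s) + (p' - k * p) * s)
        + C * s * (s' - k * s)) = 1 := by
      linear_combination hpair + k * h0
    have e3 : p * (s' - k * s) - (p' - k * p) * s = D := by linear_combination hdet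
    generalize p' - k * p = P at *
    generalize s' - k * s = S at *
    refine ⟨P, P - p, S, S - s, D, hD, by linear_combination e3, Or.inr ⟨e1, ?_, ?_⟩⟩
    · linear_combination e1 - e2
    · linear_combination e1 - 2 * e2 - h0



section general2
variable {E : Type} [AddCommGroup E]

lemma F_smul_right (β : E →ₗ[ℤ] E →ₗ[ℤ] ℤ) (x y : P E) (d : ℤ) :
    F β x (d • y) = d * F β x y := by
  simp only [F, Prod.smul_fst, Prod.smul_snd, map_smul, smul_eq_mul]
  ring

lemma F_smul_left (β : E →ₗ[ℤ] E →ₗ[ℤ] ℤ) (x y : P E) (d : ℤ) :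
    F β (d • x) y = d * F β x y := by
  simp only [F, Prod.smul_fst, Prod.smul_snd, map_smul, smul_eq_mul, LinearMap.smul_apply]
  ring

lemma abs_main (β : E →ₗ[ℤ] E →ₗ[ℤ] ℤ) (hsym : ∀ x y, β x y = β y x)
    (hev : ∀ y, ∃ q, β y y = 2 * q)
    (huni : ∀ (b : ℤ) (v : E), (∀ y, b ∣ β y v) → ∃ v', v = b • v')
    (hnd : ∀ v : E, (∀ y, β y v = 0) → v = 0)
    (d : ℤ) (hd : 0 < d) (w : P E) (c : ℤ)
    (hw : F β (d • w) (d • w) - 2 * d * c * c = -(2 * d))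
    (hl : ∃ l l₂, F β (d • w) l - 2 * d * c * l₂ = d) :
    ∃ φ : P E →+ P E × ℤ, Function.Injective φ ∧
      (∀ x : P E × ℤ, F β x.1 (d • w) - 2 * d * x.2 * c = 0 ↔ ∃ n, φ n = x) ∧
      ((∀ n k : P E, F β (φ n).1 (φ k).1 - 2 * d * (φ n).2 * (φ k).2 =
          n.1 * k.2.1 + n.2.1 * k.1 + (2 * (n.2.2.1 * k.2.2.1) - 2 * (n.2.2.2.1 * k.2.2.2.1))
          + β n.2.2.2.2 k.2.2.2.2) ∨
       (∀ n k : P E, F β (φ n).1 (φ k).1 - 2 * d * (φ n).2 * (φ k).2 =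
          n.1 * k.2.1 + n.2.1 * k.1 + 2 * (n.2.2.1 * k.2.2.2.1 + n.2.2.2.1 * k.2.2.1)
          + β n.2.2.2.2 k.2.2.2.2)) := by
  obtain ⟨l, l₂, hl⟩ := hl
  have hw0 : w ≠ 0 := by
    rintro rfl
    simp [F] at hl
    have h : d * (1 + 2 * c * l₂) = 0 := by linear_combination -hl
    rcases mul_eq_zero.mp h with h | h
    · omega
    · have : 1 + 2 * (c * l₂) = 0 := by rw [← h]; ring
      omega
  obtain ⟨a, b, hb, g, hg, hgw⟩ := reach_normal β hsym hev huni hnd w hw0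
  have hgs : ∀ x y, F β (g.symm x) (g.symm y) = F β x y := fun x y => by
    rw [← hg (g.symm x)]; simp
  have hFw : ∀ x, F β x (d • w) = d * (b * ((g x).1 + a * (g x).2.1)) := by
    intro x
    rw [F_smul_right, ← hg, hgw]
    simp only [F, map_zero]
    ring
  have hnorm : a * (d * b ^ 2) = c ^ 2 - 1 := by
    rw [F_smul_left, hFw, hgw] at hw
    have : 2 * d * (a * (d * b ^ 2)) = 2 * d * (c ^ 2 - 1) := by linear_combination hw
    exact mul_left_cancel₀ (by omega) this
  have hcop : ∃ u, b * u - 2 * c * l₂ = 1 := by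
    have e : F β (d • w) l = F β l (d • w) := by
      simp only [F, hsym l.2.2.2.2]
      ring
    rw [e, hFw] at hl
    refine ⟨_, mul_left_cancel₀ hd.ne' (?_ : d * (b * ((g l).1 + a * (g l).2.1) - 2 * c * l₂) = d * 1)⟩
    linear_combination hl
  obtain ⟨u, hu⟩ := hcop
  obtain ⟨p, p', s, s', D, hD, hdet, hbin⟩ := binary a (d * b ^ 2) c hnorm
  let φ : P E →+ P E × ℤ :=
    { toFun := fun n => (g.symm (2 * c * (s * n.2.2.1 + s' * n.2.2.2.1)
          - a * (p * n.2.2.1 + p' * n.2.2.2.1), p * n.2.2.1 + p' * n.2.2.2.1,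
          n.1, n.2.1, n.2.2.2.2), b * (s * n.2.2.1 + s' * n.2.2.2.1))
      map_zero' := by
        have : ((0, 0, 0, 0, 0) : P E) = 0 := rfl
        simp [this]
      map_add' := by
        intro n k
        ext1
        · simp only [Prod.fst_add, Prod.snd_add, ← map_add]
          congr 1
          simp only [Prod.mk_add_mk, Prod.mk.injEq]
          exact ⟨by ring, by ring, by simp⟩
        · simp only [Prod.fst_add, Prod.snd_add]
          ring }
  have hφ : ∀ n, φ n = (g.symm (2 * c * (s * n.2.2.1 + s' * n.2.2.2.1)
          - a * (p * n.2.2.1 + p' * n.2.2.2.1), p * n.2.2.1 + p' * n.2.2.2.1,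
          n.1, n.2.1, n.2.2.2.2), b * (s * n.2.2.1 + s' * n.2.2.2.1)) := fun _ => rfl
  refine ⟨φ, ?_, ?_, ?_⟩
  · rw [injective_iff_map_eq_zero]
    rintro ⟨n1, n2, X, Y, v⟩ h
    rw [hφ, Prod.mk_eq_zero, LinearEquiv.map_eq_zero_iff] at h
    simp only [Prod.mk_eq_zero] at h
    obtain ⟨⟨-, h1, rfl, rfl, rfl⟩, h2⟩ := h
    have h3 := (mul_eq_zero.mp h2).resolve_left hb
    have hX : X = 0 := by linear_combination D * s' * h1 - D * p' * h3 - X * hD - D * X * hdet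
    have hY : Y = 0 := by linear_combination D * p * h3 - D * s * h1 - Y * hD - D * Y * hdet
    subst hX hY
    rfl
  · rintro ⟨x, z⟩
    constructor
    · intro h
      simp only [hFw] at h
      have h' : b * ((g x).1 + a * (g x).2.1) = 2 * c * z :=
        mul_left_cancel₀ hd.ne' (by linear_combination h)
      -- z is divisible by b
      have hz : ∃ z', z = b * z' :=
        ⟨u * z - l₂ * ((g x).1 + a * (g x).2.1), by linear_combination l₂ * h' - z * hu⟩
      obtain ⟨z', rfl⟩ := hz
      have h'' : (g x).1 + a * (g x).2.1 = 2 * c * z' :=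
        mul_left_cancel₀ hb (by linear_combination h')
      refine ⟨((g x).2.2.1, (g x).2.2.2.1, D * (s' * (g x).2.1 - p' * z'),
        D * (p * z' - s * (g x).2.1), (g x).2.2.2.2), ?_⟩
      rw [hφ]
      have e1 : p * (D * (s' * (g x).2.1 - p' * z')) + p' * (D * (p * z' - s * (g x).2.1))
        = (g x).2.1 := by linear_combination D * (g x).2.1 * hdet + (g x).2.1 * hD
      have e2 : s * (D * (s' * (g x).2.1 - p' * z')) + s' * (D * (p * z' - s * (g x).2.1))
        = z' := by linear_combination D * z' * hdet + z' * hD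
      simp only [e1, e2, Prod.mk.injEq, and_true]
      rw [LinearEquiv.symm_apply_eq]
      have : 2 * c * z' - a * (g x).2.1 = (g x).1 := by linear_combination -h''
      rw [this]
    · rintro ⟨n, hn⟩
      rw [hφ] at hn
      rw [← hn]
      simp only [hFw, LinearEquiv.apply_symm_apply]
      ring
  · rcases hbin with ⟨h1, h2, h3⟩ | ⟨h1, h2, h3⟩
    · right
      rintro ⟨n1, n2, X, Y, v⟩ ⟨k1, k2, X', Y', v'⟩
      simp only [hφ, hgs]
      simp only [F]
      linear_combination 2 * X * X' * h1 + 2 * (X * Y' + X' * Y) * h2 + 2 * Y * Y' * h3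
    · left
      rintro ⟨n1, n2, X, Y, v⟩ ⟨k1, k2, X', Y', v'⟩
      simp only [hφ, hgs]
      simp only [F]
      linear_combination 2 * X * X' * h1 + 2 * (X * Y' + X' * Y) * h2 + 2 * Y * Y' * h3

end general2

/-! ### The concrete lattices -/

lemma bilin_add_left {ι : Type} [Fintype ι] (G : Matrix ι ι ℤ) (x x' y : ι → ℤ) :
    bilin G (x + x') y = bilin G x y + bilin G x' y := by
  simp [bilin, add_mul, Finset.sum_add_distrib]

lemma bilin_add_right {ι : Type} [Fintype ι] (G : Matrix ι ι ℤ) (x y y' : ι → ℤ) :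
    bilin G x (y + y') = bilin G x y + bilin G x y' := by
  simp [bilin, mul_add, Finset.sum_add_distrib]

lemma bilin_smul_left {ι : Type} [Fintype ι] (G : Matrix ι ι ℤ) (c : ℤ) (x y : ι → ℤ) :
    bilin G (c • x) y = c • bilin G x y := by
  simp [bilin, mul_assoc, Finset.mul_sum]

lemma bilin_smul_right {ι : Type} [Fintype ι] (G : Matrix ι ι ℤ) (c : ℤ) (x y : ι → ℤ) :
    bilin G x (c • y) = c • bilin G x y := by
  simp only [bilin, Pi.smul_apply, smul_eq_mul, Finset.mul_sum]
  exact Finset.sum_congr rfl fun i _ => Finset.sum_congr rfl fun j _ => by ring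

/-- the form of `mE₈(-1)` as a bilinear map -/
def bE (m : ℕ) : (Fin m × Fin 8 → ℤ) →ₗ[ℤ] (Fin m × Fin 8 → ℤ) →ₗ[ℤ] ℤ :=
  LinearMap.mk₂ ℤ (bilin (gramE8copies m)) (bilin_add_left _) (bilin_smul_left _)
    (bilin_add_right _) (bilin_smul_right _)

lemma bE_apply (m : ℕ) (x y) : bE m x y = bilin (gramE8copies m) x y := rfl

lemma gramE8neg_symm (i j : Fin 8) : gramE8neg i j = gramE8neg j i := by
  have := CartanMatrix.E₈_isSymm.apply i j
  simp [gramE8neg, this]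

lemma bE_eq (m : ℕ) (x y) : bE m x y =
    ∑ k, bilin gramE8neg (fun i => x (k, i)) (fun i => y (k, i)) := by
  simp [bE_apply, bilin, gramE8copies, Fintype.sum_prod_type, mul_ite, ite_mul]

lemma bE_symm (m : ℕ) (x y) : bE m x y = bE m y x := by
  simp only [bE_eq]
  refine Finset.sum_congr rfl fun k _ => ?_
  simp only [bilin]
  rw [Finset.sum_comm]
  exact Finset.sum_congr rfl fun i _ => Finset.sum_congr rfl fun j _ => by
    rw [gramE8neg_symm j i]; ring

lemma E8_even (z : Fin 8 → ℤ) : 2 ∣ bilin gramE8neg z z := by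
  refine ⟨-(z 0 ^ 2 + z 1 ^ 2 + z 2 ^ 2 + z 3 ^ 2 + z 4 ^ 2 + z 5 ^ 2 + z 6 ^ 2 + z 7 ^ 2
    - z 0 * z 2 - z 1 * z 3 - z 2 * z 3 - z 3 * z 4 - z 4 * z 5 - z 5 * z 6 - z 6 * z 7), ?_⟩
  simp [bilin, gramE8neg, CartanMatrix.E₈, Fin.sum_univ_eight]
  ring

lemma bE_even (m : ℕ) (y) : ∃ q, bE m y y = 2 * q := by
  rw [bE_eq]
  exact Finset.dvd_sum fun k _ => E8_even _

lemma E8_uni (b : ℤ) (v : Fin 8 → ℤ) (h : ∀ z, b ∣ bilin gramE8neg z v) (i : Fin 8) : b ∣ v i := by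
  have h1 := h (fun j => -CartanMatrix.E₈.adjugate i j)
  have h2 : bilin gramE8neg (fun j => -CartanMatrix.E₈.adjugate i j) v = v i := by
    have h3 : (CartanMatrix.E₈.adjugate * CartanMatrix.E₈).mulVec v i = v i := by
      rw [Matrix.adjugate_mul, CartanMatrix.E₈_det]; simp
    rw [← h3]
    simp only [bilin, gramE8neg, Matrix.mulVec, dotProduct, Matrix.mul_apply, Finset.sum_mul]
    rw [Finset.sum_comm]
    simp
  rwa [h2] at h1

lemma bE_uni (m : ℕ) (b : ℤ) (v) (h : ∀ y, b ∣ bE m y v) : ∃ v', v = b • v' := by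
  have key : ∀ p, b ∣ v p := by
    rintro ⟨k, i⟩
    refine E8_uni b (fun i => v (k, i)) (fun z => ?_) i
    have h1 := h (fun p => if p.1 = k then z p.2 else 0)
    rw [bE_eq, Finset.sum_eq_single k] at h1
    · simpa using h1
    · intro k' _ hk
      simp [bilin, hk]
    · simp
  choose v' hv' using key
  exact ⟨v', funext hv'⟩

lemma bE_nd (m : ℕ) (v) (h : ∀ y, bE m y v = 0) : v = 0 := by
  obtain ⟨v', hv'⟩ := bE_uni m 0 v (fun y => by rw [h])
  simpa using hv'

/-- coordinates on `L` -/
def coordL (m : ℕ) : (IdxL m → ℤ) ≃+ P (Fin m × Fin 8 → ℤ) × ℤ where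
  toFun x := ((x (.inl (.inl (.inl 0))), x (.inl (.inl (.inl 1))), x (.inl (.inl (.inr 0))),
    x (.inl (.inl (.inr 1))), fun p => x (.inl (.inr p))), x (.inr 0))
  invFun w := Sum.elim (Sum.elim (Sum.elim ![w.1.1, w.1.2.1] ![w.1.2.2.1, w.1.2.2.2.1])
    w.1.2.2.2.2) ![w.2]
  left_inv x := by
    funext i
    rcases i with ((i | i) | i) | i <;> try fin_cases i
    all_goals simp
  right_inv w := by simp
  map_add' x y := rfl

/-- coordinates on `K₂` -/
def coordK (m : ℕ) : (IdxK2 m → ℤ) ≃+ P (Fin m × Fin 8 → ℤ) where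
  toFun x := (x (.inl (.inl (.inl 0))), x (.inl (.inl (.inl 1))), x (.inl (.inr 0)),
    x (.inr 0), fun p => x (.inl (.inl (.inr p))))
  invFun w := Sum.elim (Sum.elim (Sum.elim ![w.1, w.2.1] w.2.2.2.2) ![w.2.2.1]) ![w.2.2.2.1]
  left_inv x := by
    funext i
    rcases i with ((i | i) | i) | i <;> try fin_cases i
    all_goals simp
  right_inv w := by simp
  map_add' x y := rfl

/-- coordinates on `T` -/
def coordT (m : ℕ) : (IdxT m → ℤ) ≃+ P (Fin m × Fin 8 → ℤ) where
  toFun x := (x (.inl (.inl 0)), x (.inl (.inl 1)), x (.inl (.inr 0)),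
    x (.inl (.inr 1)), fun p => x (.inr p))
  invFun w := Sum.elim (Sum.elim ![w.1, w.2.1] ![w.2.2.1, w.2.2.2.1]) w.2.2.2.2
  left_inv x := by
    funext i
    rcases i with (i | i) | i <;> try fin_cases i
    all_goals simp
  right_inv w := by simp
  map_add' x y := rfl

lemma bilin_L (m d : ℕ) (x y : IdxL m → ℤ) : bilin (gramL m d) x y =
    F (bE m) (coordL m x).1 (coordL m y).1 - 2 * (d : ℤ) * (coordL m x).2 * (coordL m y).2 := by
  simp [bilin, gramL, gramII, gramU, F, coordL, bE_apply, Fintype.sum_sum_type, Fin.sum_univ_two]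
  ring

lemma bilin_K (m : ℕ) (x y : IdxK2 m → ℤ) : bilin (gramK2 m) x y =
    (coordK m x).1 * (coordK m y).2.1 + (coordK m x).2.1 * (coordK m y).1
    + (2 * ((coordK m x).2.2.1 * (coordK m y).2.2.1)
      - 2 * ((coordK m x).2.2.2.1 * (coordK m y).2.2.2.1))
    + bE m (coordK m x).2.2.2.2 (coordK m y).2.2.2.2 := by
  simp [bilin, gramK2, gramU, coordK, bE_apply, Fintype.sum_sum_type, Fin.sum_univ_two]
  ring

lemma bilin_T (m : ℕ) (x y : IdxT m → ℤ) : bilin (gramT m) x y =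
    (coordT m x).1 * (coordT m y).2.1 + (coordT m x).2.1 * (coordT m y).1
    + 2 * ((coordT m x).2.2.1 * (coordT m y).2.2.2.1
      + (coordT m x).2.2.2.1 * (coordT m y).2.2.1)
    + bE m (coordT m x).2.2.2.2 (coordT m y).2.2.2.2 := by
  simp [bilin, gramT, gramU, gramU2, coordT, bE_apply, Fintype.sum_sum_type, Fin.sum_univ_two]
  ring

lemma isometric_of {ι κ : Type} [Fintype ι] [Fintype κ] (G : Matrix ι ι ℤ) (H : Matrix κ κ ℤ)
    (r : ι → ℤ) (f : (κ → ℤ) →+ (ι → ℤ)) (hinj : Function.Injective f)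
    (hr : ∀ x, bilin G x r = 0 ↔ ∃ n, f n = x)
    (hf : ∀ n k, bilin G (f n) (f k) = bilin H n k) :
    LatIsometric (fun x y : ↥(orthC G r) => bilin G (x : ι → ℤ) (y : ι → ℤ)) (bilin H) := by
  let f' : (κ → ℤ) →ₗ[ℤ] ↥(orthC G r) :=
    f.toIntLinearMap.codRestrict (orthC G r) (fun n => (hr _).mpr ⟨n, rfl⟩)
  have hb : Function.Bijective f' := by
    constructor
    · intro x y h
      exact hinj (congrArg Subtype.val h)
    · rintro ⟨x, hx⟩
      obtain ⟨n, hn⟩ := (hr x).mp hx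
      exact ⟨n, Subtype.ext hn⟩
  refine ⟨(LinearEquiv.ofBijective f' hb).symm, fun x y => ?_⟩
  obtain ⟨n, rfl⟩ := (LinearEquiv.ofBijective f' hb).surjective x
  obtain ⟨k, rfl⟩ := (LinearEquiv.ofBijective f' hb).surjective y
  simp only [LinearEquiv.symm_apply_apply]
  exact (hf n k).symm

lemma div_vec (m d : ℕ) (r : IdxL m → ℤ) (h : ∀ l, (d : ℤ) ∣ bilin (gramL m d) r l) :
    ∃ w, (coordL m r).1 = (d : ℤ) • w := by
  have h' : ∀ l : P (Fin m × Fin 8 → ℤ), (d : ℤ) ∣ F (bE m) (coordL m r).1 l := by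
    intro l
    have := h ((coordL m).symm (l, 0))
    rw [bilin_L] at this
    simpa using this
  generalize (coordL m r).1 = v at h'
  obtain ⟨a, b, c, e, v⟩ := v
  obtain ⟨b', rfl⟩ : (d : ℤ) ∣ b := by simpa [F] using h' (1, 0, 0, 0, 0)
  obtain ⟨a', rfl⟩ : (d : ℤ) ∣ a := by simpa [F] using h' (0, 1, 0, 0, 0)
  obtain ⟨e', rfl⟩ : (d : ℤ) ∣ e := by simpa [F] using h' (0, 0, 1, 0, 0)
  obtain ⟨c', rfl⟩ : (d : ℤ) ∣ c := by simpa [F] using h' (0, 0, 0, 1, 0)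
  obtain ⟨v', rfl⟩ := bE_uni m d v (fun y => by
    rw [bE_symm]; simpa [F] using h' (0, 0, 0, 0, y))
  exact ⟨(a', b', c', e', v'), rfl⟩

end OCD

/-- Let `r` be a primitive vector in `L = L_{2d}^{(m)}` with
`(r,r) = −2d` and `div(r) = d`.  Then the orthogonal complement `K_r`, with the
restricted form, is isometric either to `K_2^{(m)} = U ⊕ mE₈(−1) ⊕ ⟨2⟩ ⊕ ⟨−2⟩` or to
`T_{2,8m+2} = U ⊕ U(2) ⊕ mE₈(−1)`. -/
theorem orthogonal_complement_divisor_d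
    (m d : ℕ) (hd : 1 ≤ d) (r : IdxL m → ℤ) (hprim : IsPrim r)
    (hr : bilin (gramL m d) r r = -(2 * (d : ℤ)))
    (hdiv : IsDivisorOf (gramL m d) r (d : ℤ)) :
    LatIsometric
      (fun x y : ↥(orthC (gramL m d) r) =>
        bilin (gramL m d) (x : IdxL m → ℤ) (y : IdxL m → ℤ))
      (bilin (gramK2 m)) ∨
    LatIsometric
      (fun x y : ↥(orthC (gramL m d) r) =>
        bilin (gramL m d) (x : IdxL m → ℤ) (y : IdxL m → ℤ))
      (bilin (gramT m)) := by
  obtain ⟨-, hdvd, l, hl⟩ := hdiv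
  obtain ⟨w, hw⟩ := OCD.div_vec m d r hdvd
  rw [OCD.bilin_L, hw] at hr hl
  obtain ⟨φ, hinj, hran, hform⟩ := OCD.abs_main (OCD.bE m) (OCD.bE_symm m) (OCD.bE_even m)
    (OCD.bE_uni m) (OCD.bE_nd m) d (by exact_mod_cast hd) w _ hr ⟨_, _, hl⟩
  have hperp : ∀ x, bilin (gramL m d) x r = 0 ↔ ∃ n, (OCD.coordL m).symm (φ n) = x := by
    intro x
    rw [OCD.bilin_L, hw, hran]
    simp only [AddEquiv.symm_apply_eq]
  rcases hform with h | h
  · left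
    refine OCD.isometric_of _ _ _
      (((OCD.coordL m).symm.toAddMonoidHom.comp φ).comp (OCD.coordK m).toAddMonoidHom) ?_ ?_ ?_
    · exact (OCD.coordL m).symm.injective.comp (hinj.comp (OCD.coordK m).injective)
    · intro x
      rw [hperp]
      exact (OCD.coordK m).surjective.exists
    · intro n k
      rw [OCD.bilin_L, OCD.bilin_K, ← h]
      simp
  · right
    refine OCD.isometric_of _ _ _
      (((OCD.coordL m).symm.toAddMonoidHom.comp φ).comp (OCD.coordT m).toAddMonoidHom) ?_ ?_ ?_
    · exact (OCD.coordL m).symm.injective.comp (hinj.comp (OCD.coordT m).injective)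
    · intro x
      rw [hperp]
      exact (OCD.coordT m).surjective.exists
    · intro n k
      rw [OCD.bilin_L, OCD.bilin_T, ← h]
      simp
end

section
/- Let m ≥ 0 be an integer, let d > 1 be an integer, and let L = L_{2d}^{(m)} = 2U ⊕ mE8(−1) ⊕ ⟨−2d⟩. Then the number of orbits of the stable orthogonal group Õ(L) on the set of primitive vectors r ∈ L with (r,r) = −2d and div(r) = 2d is exactly 2^{ρ(d)}, where ρ(d) is the number of distinct prime divisors of d. -/
/-- Componentwise embedding of the lattice `ι → ℤ` into `ι → ℚ` (i.e. into `L ⊗ ℚ`). -/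
def castV {ι : Type} (x : ι → ℤ) : ι → ℚ := fun i => (x i : ℚ)

/-- The `ℚ`-bilinear extension of the form with Gram matrix `G` to `ι → ℚ`. -/
def bilinQ {ι : Type} [Fintype ι] (G : Matrix ι ι ℤ) (x y : ι → ℚ) : ℚ :=
  ∑ i, ∑ j, x i * (G i j : ℚ) * y j

/-- `g` lies in the stable orthogonal group `Õ(L)` of the lattice `L = (ι → ℤ)` with
Gram matrix `G`:  `g` is an isometry of `L` whose `ℚ`-linear extension `g_ℚ` satisfies
`g_ℚ(y) − y ∈ L` for every `y` in the dual lattice `L^∨ ⊆ L ⊗ ℚ`.  (The condition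
`g_ℚ(y) − y ∈ L` is expressed by clearing denominators: whenever `N • y = x` comes from
`x ∈ L`, one has `g x − x ∈ N • L`.) -/
def InStableO {ι : Type} [Fintype ι] (G : Matrix ι ι ℤ)
    (g : (ι → ℤ) ≃ₗ[ℤ] (ι → ℤ)) : Prop :=
  (∀ x y, bilin G (g x) (g y) = bilin G x y) ∧
    ∀ y : ι → ℚ, (∀ l : ι → ℤ, ∃ a : ℤ, bilinQ G y (castV l) = (a : ℚ)) →
      ∀ (N : ℤ) (x : ι → ℤ), (N : ℚ) • y = castV x → ∃ l : ι → ℤ, g x - x = N • l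

/-- The set of orbits of the stable orthogonal group `Õ(L)` on a set `S` of lattice
vectors. -/
def stableOrbits {ι : Type} [Fintype ι] (G : Matrix ι ι ℤ) (S : Set (ι → ℤ)) :
    Set (Set (ι → ℤ)) :=
  {O | ∃ r ∈ S, O = {r' | ∃ g : (ι → ℤ) ≃ₗ[ℤ] (ι → ℤ), InStableO G g ∧ g r = r'}}

section Abstract
variable {V : Type*} [AddCommGroup V] (B : V →ₗ[ℤ] V →ₗ[ℤ] ℤ)

/-- Stable isometries, abstractly. -/
def St (g : V ≃ₗ[ℤ] V) : Prop :=
  (∀ x y, B (g x) (g y) = B x y) ∧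
    ∀ (N : ℤ), N ≠ 0 → ∀ x : V, (∀ l, N ∣ B x l) → ∃ l, g x - x = N • l

/-- Orbit relation. -/
def ORel (r s : V) : Prop := ∃ g : V ≃ₗ[ℤ] V, St B g ∧ g r = s

lemma St.refl : St B (LinearEquiv.refl ℤ V) :=
  ⟨fun _ _ => rfl, fun N _ x _ => ⟨0, by simp⟩⟩

lemma St.symm {g : V ≃ₗ[ℤ] V} (h : St B g) : St B g.symm := by
  refine ⟨fun x y => by rw [← h.1]; simp, fun N hN x hx => ?_⟩
  obtain ⟨l, hl⟩ := h.2 N hN (g.symm x) (fun l => by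
    have := hx (g l)
    rw [← h.1]; simpa using this)
  refine ⟨-l, ?_⟩
  rw [smul_neg, ← hl]; simp

lemma St.trans {g h : V ≃ₗ[ℤ] V} (hg : St B g) (hh : St B h) : St B (g.trans h) := by
  refine ⟨fun x y => by simp [hg.1, hh.1], fun N hN x hx => ?_⟩
  obtain ⟨l, hl⟩ := hg.2 N hN x hx
  obtain ⟨l', hl'⟩ := hh.2 N hN (g x) (fun l => by
    have := hx (g.symm l)
    rw [← hg.1] at this; simpa using this)
  refine ⟨l + l', ?_⟩
  rw [smul_add, ← hl, ← hl']; simp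

variable {B}
lemma ORel.refl (r : V) : ORel B r r := ⟨_, St.refl B, rfl⟩
lemma ORel.symm {r s : V} (h : ORel B r s) : ORel B s r := by
  obtain ⟨g, hg, rfl⟩ := h
  exact ⟨g.symm, hg.symm, by simp⟩
lemma ORel.trans {r s t : V} (h : ORel B r s) (h' : ORel B s t) : ORel B r t := by
  obtain ⟨g, hg, rfl⟩ := h
  obtain ⟨g', hg', rfl⟩ := h'
  exact ⟨g.trans g', hg.trans _ hg', by simp⟩

variable (B) in
/-- The Eichler transvection as a linear map. -/
def eich (e a : V) (q : ℤ) : V →ₗ[ℤ] V :=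
  LinearMap.id - (B a).smulRight e + (B e).smulRight a - q • (B e).smulRight e

lemma eich_apply (e a : V) (q : ℤ) (x : V) :
    eich B e a q x = x - B a x • e + B e x • a - (q * B e x) • e := by
  simp [eich, mul_smul, smul_comm q]

lemma eich_eich (hs : ∀ x y, B x y = B y x) {e a : V} {q : ℤ} (he : B e e = 0) (hea : B e a = 0)
    (ha : B a a = 2 * q) (x : V) : eich B e (-a) q (eich B e a q x) = x := by
  have hae : B a e = 0 := by rw [hs, hea]
  simp only [eich_apply, map_add, map_sub, map_smul, map_neg, LinearMap.neg_apply,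
    smul_eq_mul, he, hae, hea, ha]
  module

/-- The Eichler transvection. -/
def eichE (hs : ∀ x y, B x y = B y x) {e a : V} {q : ℤ} (he : B e e = 0) (hea : B e a = 0)
    (ha : B a a = 2 * q) : V ≃ₗ[ℤ] V :=
  LinearEquiv.ofLinearMap (eich B e a q) (eich B e (-a) q)
    (by
      ext x
      have := eich_eich (B := B) hs (e := e) (a := -a) (q := q) he (by simp [hea]) (by simp [ha]) x
      rw [neg_neg] at this
      simpa using this)
    (by ext x; simpa using eich_eich hs he hea ha x)

lemma eichE_st (hs : ∀ x y, B x y = B y x) {e a : V} {q : ℤ} (he : B e e = 0) (hea : B e a = 0)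
    (ha : B a a = 2 * q) : St B (eichE hs he hea ha) := by
  have hae : B a e = 0 := by rw [hs, hea]
  constructor
  · intro x y
    change B (eich B e a q x) (eich B e a q y) = _
    simp only [eich_apply, map_add, map_sub, map_smul, LinearMap.add_apply, LinearMap.sub_apply,
      LinearMap.smul_apply, smul_eq_mul, he, hae, hea, ha, hs x e, hs x a]
    ring
  · intro N hN x hx
    change ∃ l, eich B e a q x - x = _
    obtain ⟨α, hα⟩ := hx a
    obtain ⟨β, hβ⟩ := hx e
    refine ⟨-α • e + β • a - (q * β) • e, ?_⟩
    rw [eich_apply, hs a, hs e, hα, hβ]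
    module

lemma rel_eich (hs : ∀ x y, B x y = B y x) {e a : V} {q : ℤ} (he : B e e = 0) (hea : B e a = 0)
    (ha : B a a = 2 * q) (x : V) :
    ORel B x (x - B a x • e + B e x • a - (q * B e x) • e) :=
  ⟨_, eichE_st hs he hea ha, eich_apply _ _ _ _⟩

/-- Reflection in a vector of square `2 * u`, `u * u = 1`. -/
lemma rel_refl (hs : ∀ x y, B x y = B y x) {ρ : V} {u : ℤ} (hu : u * u = 1)
    (hρ : B ρ ρ = 2 * u) (x : V) : ORel B x (x - (u * B ρ x) • ρ) := by
  have key : ∀ y, y - (u * B ρ y) • ρ - (u * B ρ (y - (u * B ρ y) • ρ)) • ρ = y := by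
    intro y
    simp only [map_sub, map_smul, smul_eq_mul, hρ]
    have : (u * (B ρ y - u * B ρ y * (2 * u))) = - (u * B ρ y) := by
      linear_combination (-2 * u * B ρ y) * hu
    rw [this]; module
  let f : V →ₗ[ℤ] V := LinearMap.id - u • (B ρ).smulRight ρ
  have hf : ∀ y, f y = y - (u * B ρ y) • ρ := by intro y; simp [f, mul_smul, smul_comm u]
  have hff : f ∘ₗ f = LinearMap.id := by
    ext y; simp only [LinearMap.comp_apply, hf, LinearMap.id_apply, key]
  refine ⟨LinearEquiv.ofLinearMap f f hff hff, ⟨?_, ?_⟩, hf x⟩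
  · intro x y
    change B (f x) (f y) = _
    simp only [hf, map_sub, map_smul, LinearMap.sub_apply,
      LinearMap.smul_apply, smul_eq_mul, hρ, hs x ρ]
    linear_combination (2 * u * B ρ x * B ρ y) * hu
  · intro N hN x hx
    change ∃ l, f x - x = _
    obtain ⟨α, hα⟩ := hx ρ
    refine ⟨-(u * α) • ρ, ?_⟩
    rw [hf, hs ρ, hα]; module

structure Hyp (B : V →ₗ[ℤ] V →ₗ[ℤ] ℤ) (e f : V) : Prop where
  ee : B e e = 0
  ff : B f f = 0
  ef : B e f = 1

lemma ORel.isom {r s : V} (h : ORel B r s) : B s s = B r r := by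
  obtain ⟨g, hg, rfl⟩ := h
  exact hg.1 _ _

lemma ORel.dvd {r s : V} (h : ORel B r s) {D : ℤ} (hr : ∀ l, D ∣ B r l) : ∀ l, D ∣ B s l := by
  obtain ⟨g, hg, rfl⟩ := h
  intro l
  have := hr (g.symm l)
  rw [← hg.1] at this; simpa using this

lemma ORel.sub {r s : V} (h : ORel B r s) {D : ℤ} (hD : D ≠ 0) (hr : ∀ l, D ∣ B r l) :
    ∃ l, s - r = D • l := by
  obtain ⟨g, hg, rfl⟩ := h
  exact hg.2 D hD r hr

lemma exists_pos (hs : ∀ x y, B x y = B y x) (hev : ∀ x, ∃ q, B x x = 2 * q) {e f : V}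
    (h : Hyp B e f) {r : V} (hr : ∃ l, B r l ≠ 0) : ∃ s, ORel B r s ∧ 0 < B f s := by
  have hfe : B f e = 1 := by rw [hs, h.ef]
  -- it suffices to get something nonzero
  suffices H : ∃ s, ORel B r s ∧ B f s ≠ 0 by
    obtain ⟨s, hrs, hn⟩ := H
    rcases lt_or_gt_of_ne hn with hn | hn
    · have h1 := rel_refl (B := B) hs (ρ := e - f) (u := -1) (by norm_num)
        (by simp [h.ee, h.ff, h.ef, hfe]) s
      have h2 := rel_refl (B := B) hs (ρ := e + f) (u := 1) (by norm_num)
        (by simp [h.ee, h.ff, h.ef, hfe])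
        (s - (-1 * B (e - f) s) • (e - f))
      refine ⟨_, hrs.trans (h1.trans h2), ?_⟩
      simp [h.ee, h.ff, h.ef, hfe]
      linarith
    · exact ⟨s, hrs, hn⟩
  by_cases h0 : B f r = 0
  swap
  · exact ⟨r, ORel.refl r, h0⟩
  by_cases h1 : B e r = 0
  swap
  · have h1 := rel_refl (B := B) hs (ρ := e - f) (u := -1) (by norm_num)
        (by simp [h.ee, h.ff, h.ef, hfe]) r
    refine ⟨_, h1, ?_⟩
    simp [h.ff, hfe]
    omega
  obtain ⟨l, hl⟩ := hr
  obtain ⟨q, hq⟩ := hev (l - B l f • e - B l e • f)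
  have := rel_eich hs h.ee (a := l - B l f • e - B l e • f) (by
    simp [h.ee, h.ff, h.ef, hs e l]) hq r
  refine ⟨_, this, ?_⟩
  rw [hs] at hl
  simpa [h0, h1, h.ff, hfe, hs f l] using hl

lemma exists_eq_div (hs : ∀ x y, B x y = B y x) (hev : ∀ x, ∃ q, B x x = 2 * q) {e f e' f' : V}
    (h : Hyp B e f) (h' : Hyp B e' f') (hee : B e e' = 0) (hef : B e f' = 0)
    (hfe : B f e' = 0) (hff : B f f' = 0) {r : V} {D : ℤ} (hD : 0 < D) (hr : ∀ l, D ∣ B r l)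
    (hr' : ∃ l, B r l = D) : ∃ s, ORel B r s ∧ B f s = D := by
  have h1 : B f e = 1 := by rw [hs, h.ef]
  have h1' : B f' e' = 1 := by rw [hs, h'.ef]
  have ex : ∃ n : ℕ, ∃ s, ORel B r s ∧ B f s = n ∧ 0 < n := by
    obtain ⟨s, hs1, hs2⟩ := exists_pos hs hev h (r := r) (by
      obtain ⟨l, hl⟩ := hr'; exact ⟨l, by omega⟩)
    exact ⟨(B f s).toNat, s, hs1, by omega, by omega⟩
  classical
  obtain ⟨k, ⟨s, hrs, hk, hk0⟩, hmin⟩ : ∃ k : ℕ, (∃ s, ORel B r s ∧ B f s = k ∧ 0 < k) ∧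
      ∀ s, ORel B r s → 0 < B f s → (k : ℤ) ≤ B f s := by
    refine ⟨Nat.find ex, Nat.find_spec ex, fun s hs hp => ?_⟩
    have := Nat.find_min' ex (m := (B f s).toNat) ⟨s, hs, by omega, by omega⟩
    omega
  -- divisibility claim
  have claim : ∀ p q : V, B p p = 0 → B q q = 0 → B q p = 1 → B e p = 0 → B e q = 0 →
      B f p = 0 → B f q = 0 → ∀ s, ORel B r s → B f s = k → (k : ℤ) ∣ B q s := by
    intro p q hp hq hqp hep heq hfp hfq s hrs hk
    by_contra hnd
    have t1 := rel_eich hs h.ff (a := (-(B q s / k)) • p) (q := 0) (by simp [hfp])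
      (by simp [hp]) s
    obtain ⟨s', hs'⟩ : ∃ s', s' = s - B ((-(B q s / k)) • p) s • f + B f s • (-(B q s / k)) • p -
      (0 * B f s) • f := ⟨_, rfl⟩
    rw [← hs'] at t1
    have a1 : B f s' = k := by rw [hs']; simp [h.ff, hfp, hk]
    have a2 : B q s' = B q s % k := by
      rw [hs', Int.emod_def]; simp [hs q f, hfq, hqp, hk]; ring
    have t2 := rel_eich hs h.ee (a := q) (q := 0) heq (by simp [hq]) s'
    have := hmin _ (hrs.trans (t1.trans t2)) (by
      simp [h1, hfq, a1, a2]
      exact Int.emod_lt_of_pos _ (by omega))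
    simp [h1, hfq, a1, a2] at this
    have := Int.emod_nonneg (B q s) (b := k) (by omega)
    exact hnd (Int.dvd_of_emod_eq_zero (by omega))
  have c2 := claim e' f' h'.ee h'.ff h1' hee hef hfe hff
  have c1 := claim f' e' h'.ff h'.ee h'.ef hef hee hff hfe
  -- make `B e' s = 0`
  obtain ⟨s, hrs, hk, hz⟩ : ∃ s, ORel B r s ∧ B f s = k ∧ B e' s = 0 := by
    obtain ⟨j, hj⟩ := c1 s hrs hk
    have t1 := rel_eich hs h.ff (a := (-j) • f') (q := 0) (by simp [hff])
      (by simp [h'.ff]) s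
    refine ⟨_, hrs.trans t1, ?_, ?_⟩
    · simp [h.ff, hff, hk]
    · simp [hs e' f, hfe, h'.ef, hk, hj]
  have hdiv : ∀ l, (k : ℤ) ∣ B s l := by
    intro l
    have hf' := c2 s hrs hk
    obtain ⟨q, hq⟩ := hev (l - B l f' • e' - B l e' • f')
    have t := rel_eich hs h'.ee (a := l - B l f' • e' - B l e' • f') (by
      simp [h'.ee, h'.ef, hs e' l]) hq s
    have := c2 _ (hrs.trans t) (by simp [hfe, hk, hz])
    simp [hz, h1'] at this
    rw [hs s l]
    obtain ⟨u, hu⟩ := hf'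
    obtain ⟨v, hv⟩ := this
    rw [hu] at hv
    exact ⟨u - v + B l e' * u, by linear_combination -hv⟩
  refine ⟨s, hrs, ?_⟩
  have d1 : (k : ℤ) ∣ D := by
    obtain ⟨l, hl⟩ := hr'
    rw [← hl]; exact hrs.symm.dvd hdiv l
  have d2 : D ∣ k := by rw [← hk, hs]; exact hrs.dvd hr f
  rw [hk]
  exact Int.dvd_antisymm (by omega) (by omega) d1 d2

theorem eichler (hs : ∀ x y, B x y = B y x) (hev : ∀ x, ∃ q, B x x = 2 * q) {e f e' f' : V}
    (h : Hyp B e f) (h' : Hyp B e' f') (hee : B e e' = 0) (hef : B e f' = 0)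
    (hfe : B f e' = 0) (hff : B f f' = 0) {r r' : V} {D : ℤ} (hD : 0 < D) (hr : ∀ l, D ∣ B r l)
    (hr1 : ∃ l, B r l = D) (hr' : ∀ l, D ∣ B r' l) (hr1' : ∃ l, B r' l = D)
    (hn : B r r = B r' r') (hc : ∃ l, r' - r = D • l) : ORel B r r' := by
  have h1 : B f e = 1 := by rw [hs, h.ef]
  obtain ⟨s, hrs, hs1⟩ := exists_eq_div hs hev h h' hee hef hfe hff hD hr hr1
  obtain ⟨s', hrs', hs1'⟩ := exists_eq_div hs hev h h' hee hef hfe hff hD hr' hr1'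
  refine hrs.trans (ORel.trans ?_ hrs'.symm)
  obtain ⟨l, hl⟩ : ∃ l, s' - s = D • l := by
    obtain ⟨l0, h0⟩ := hc
    obtain ⟨l1, h1⟩ := hrs.sub hD.ne' hr
    obtain ⟨l2, h2⟩ := hrs'.sub hD.ne' hr'
    exact ⟨l0 - l1 + l2, by rw [smul_add, smul_sub, ← h0, ← h1, ← h2]; abel⟩
  have hlf : B f l = 0 := by
    have : B f (s' - s) = D * B f l := by rw [hl]; simp
    rw [map_sub, hs1, hs1', sub_self] at this
    rcases mul_eq_zero.1 this.symm with h | h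
    · omega
    · exact h
  obtain ⟨q, hq⟩ := hev (l - B l e • f)
  have t := rel_eich hs h.ff (a := l - B l e • f) (by simp [h.ff, hlf]) hq s
  obtain ⟨γ, hγ⟩ : ∃ γ : ℤ, s - B (l - B l e • f) s • f + B f s • (l - B l e • f) - (q * B f s) • f
      = s' + γ • f := by
    refine ⟨-B (l - B l e • f) s - D * B l e - q * D, ?_⟩
    have : s' = s + D • l := by rw [← hl]; abel
    rw [hs1, this]; module
  rw [hγ] at t
  have hno := t.isom
  have e1 : B s s = B s' s' := by rw [hrs.isom, hrs'.isom, hn]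
  simp [h.ff, hs s' f, hs1', e1] at hno
  have hγD : γ * D = 0 := by linarith
  have : γ = 0 := by
    rcases mul_eq_zero.1 hγD with h | h
    · exact h
    · omega
  simpa [this] using t

end Abstract
lemma idem_prime_pow {p k : ℕ} (hp : p.Prime) (y : ZMod (p ^ k)) (hy : y * y = y) : y = 0 ∨ y = 1 := by
  have : NeZero (p ^ k) := ⟨pow_ne_zero _ hp.ne_zero⟩
  obtain ⟨a, rfl⟩ := ZMod.intCast_surjective y
  have h : ((a * (a - 1) : ℤ) : ZMod (p ^ k)) = 0 := by push_cast; linear_combination hy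
  rw [ZMod.intCast_zmod_eq_zero_iff_dvd] at h
  push_cast at h
  have hcop : IsCoprime a (a - 1) := ⟨1, -1, by ring⟩
  by_cases hpa : (p : ℤ) ∣ a
  · have : IsCoprime (p : ℤ) (a - 1) := hcop.of_isCoprime_of_dvd_left hpa
    left
    rw [ZMod.intCast_zmod_eq_zero_iff_dvd]
    push_cast
    exact (this.pow_left).dvd_of_dvd_mul_right h
  · have hc : IsCoprime (p : ℤ) a := by
      rw [Prime.coprime_iff_not_dvd (Nat.prime_iff_prime_int.1 hp)]; exact hpa
    right
    have h2 : ((p ^ k : ℕ) : ℤ) ∣ a - 1 := by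
      push_cast; exact (hc.pow_left).dvd_of_dvd_mul_left h
    rw [← ZMod.intCast_zmod_eq_zero_iff_dvd] at h2
    push_cast at h2
    exact sub_eq_zero.1 h2

theorem card_idem (d : ℕ) (hd : d ≠ 0) :
    Nat.card {y : ZMod d // y * y = y} = 2 ^ d.primeFactors.card := by
  let φ := ZMod.equivPi d hd
  have e1 : {y : ZMod d // y * y = y} ≃
      {y : (p : d.primeFactors) → ZMod (p.1 ^ d.factorization p) // ∀ p, y p * y p = y p} :=
    φ.toEquiv.subtypeEquiv (fun y => by
      have : y * y = y ↔ φ y * φ y = φ y := by rw [← map_mul, φ.injective.eq_iff]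
      rw [this, funext_iff]; rfl)
  rw [Nat.card_congr (e1.trans (Equiv.subtypePiEquivPi (p := fun p : d.primeFactors => fun y : ZMod (p.1 ^ d.factorization p) => y * y = y))), Nat.card_pi]
  have : ∀ p : d.primeFactors, Nat.card {y : ZMod (p.1 ^ d.factorization p) // y * y = y} = 2 := by
    rintro ⟨p, hp⟩
    have hpp := Nat.prime_of_mem_primeFactors hp
    have hk : d.factorization p ≠ 0 := by
      exact (hpp.factorization_pos_of_dvd hd (Nat.dvd_of_mem_primeFactors hp)).ne'
    have : Fact (1 < p ^ d.factorization p) := ⟨Nat.one_lt_pow hk hpp.one_lt⟩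
    have hset : {y : ZMod (p ^ d.factorization p) | y * y = y} = {0, 1} := by
      ext y
      constructor
      · exact idem_prime_pow hpp y
      · rintro (rfl | rfl) <;> simp
    change Nat.card ↥{y : ZMod (p ^ d.factorization p) | y * y = y} = 2
    rw [hset, Nat.card_coe_set_eq, Set.ncard_pair zero_ne_one]
  simp [this]

lemma bilin_eq {ι : Type} [Fintype ι] [DecidableEq ι] (G : Matrix ι ι ℤ) (x y : ι → ℤ) :
    Matrix.toBilin' G x y = bilin G x y := by
  rw [Matrix.toBilin'_apply]; rfl

lemma bilin_dot {ι : Type} [Fintype ι] (G : Matrix ι ι ℤ) (x y : ι → ℤ) :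
    bilin G x y = x ⬝ᵥ G.mulVec y := by
  simp only [bilin, dotProduct, Matrix.mulVec, Finset.mul_sum, mul_assoc]

lemma bilin_transpose {ι : Type} [Fintype ι] (G : Matrix ι ι ℤ) (x y : ι → ℤ) :
    bilin G.transpose x y = bilin G y x := by
  unfold bilin
  rw [Finset.sum_comm]
  refine Finset.sum_congr rfl fun i _ => Finset.sum_congr rfl fun j _ => ?_
  rw [Matrix.transpose_apply]; ring

lemma bilin_even {ι : Type} [Fintype ι] {G A : Matrix ι ι ℤ} (h : G = A + A.transpose)
    (x : ι → ℤ) : bilin G x x = 2 * bilin A x x := by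
  have : bilin G x x = bilin A x x + bilin A.transpose x x := by
    rw [bilin_dot, bilin_dot, bilin_dot, h, Matrix.add_mulVec, dotProduct_add]
  rw [this, bilin_transpose]; ring

lemma bilin_symm {ι : Type} [Fintype ι] {G A : Matrix ι ι ℤ} (h : G = A + A.transpose)
    (x y : ι → ℤ) : bilin G x y = bilin G y x := by
  rw [← bilin_transpose G]
  congr 1
  rw [h]; simp [add_comm]

/-- Half of `E₈(−1)`. -/
def halfE8 : Matrix (Fin 8) (Fin 8) ℤ :=
  Matrix.of fun i j => if i < j then gramE8neg i j else if i = j then -1 else 0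

/-- The inverse of `E₈(−1)`. -/
def invE8 : Matrix (Fin 8) (Fin 8) ℤ :=
  -!![4, 5, 7, 10, 8, 6, 4, 2;
  5, 8, 10, 15, 12, 9, 6, 3;
  7, 10, 14, 20, 16, 12, 8, 4;
  10, 15, 20, 30, 24, 18, 12, 6;
  8, 12, 16, 24, 20, 15, 10, 5;
  6, 9, 12, 18, 15, 12, 8, 4;
  4, 6, 8, 12, 10, 8, 6, 3;
  2, 3, 4, 6, 5, 4, 3, 2]

lemma halfE8_eq : gramE8neg = halfE8 + halfE8.transpose := by
  decide

lemma invE8_eq : gramE8neg * invE8 = 1 := by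
  decide

open scoped Kronecker in
lemma gramE8copies_eq (m : ℕ) : gramE8copies m = (1 : Matrix (Fin m) (Fin m) ℤ) ⊗ₖ gramE8neg := by
  ext ⟨i, j⟩ ⟨k, l⟩
  simp [gramE8copies, Matrix.one_apply]

open scoped Kronecker in
lemma gramII_half (m : ℕ) : ∃ A : Matrix (IdxII m) (IdxII m) ℤ, gramII m = A + A.transpose := by
  have hU : gramU = !![0, 1; 0, 0] + (!![0, 1; 0, 0] : Matrix (Fin 2) (Fin 2) ℤ).transpose := by
    decide
  refine ⟨Matrix.fromBlocks (Matrix.fromBlocks !![0, 1; 0, 0] 0 0 !![0, 1; 0, 0]) 0 0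
    ((1 : Matrix (Fin m) (Fin m) ℤ) ⊗ₖ halfE8), ?_⟩
  rw [gramII, gramE8copies_eq]
  simp only [Matrix.fromBlocks_transpose, Matrix.fromBlocks_add, Matrix.transpose_zero, add_zero,
    ← hU]
  congr 1
  conv_lhs => rw [halfE8_eq]
  rw [Matrix.kronecker_add]
  congr 1
  ext ⟨i, j⟩ ⟨k, l⟩
  simp [Matrix.one_apply, eq_comm]

lemma gramL_half (m d : ℕ) : ∃ A : Matrix (IdxL m) (IdxL m) ℤ, gramL m d = A + A.transpose := by
  obtain ⟨A, hA⟩ := gramII_half m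
  refine ⟨Matrix.fromBlocks A 0 0 !![-(d : ℤ)], ?_⟩
  rw [gramL]
  simp only [Matrix.fromBlocks_transpose, Matrix.fromBlocks_add, Matrix.transpose_zero, add_zero,
    ← hA]
  congr 1
  ext i j
  fin_cases i; fin_cases j
  simp; ring

open scoped Kronecker in
lemma gramII_inv (m : ℕ) : ∃ H : Matrix (IdxII m) (IdxII m) ℤ, gramII m * H = 1 := by
  have hU : gramU * gramU = 1 := by decide
  refine ⟨Matrix.fromBlocks (Matrix.fromBlocks gramU 0 0 gramU) 0 0
    ((1 : Matrix (Fin m) (Fin m) ℤ) ⊗ₖ invE8), ?_⟩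
  rw [gramII, gramE8copies_eq]
  simp [Matrix.fromBlocks_multiply, hU, ← Matrix.mul_kronecker_mul, invE8_eq]

lemma gramII_dvd (m : ℕ) {D : ℤ} {u : IdxII m → ℤ} (h : ∀ l, D ∣ bilin (gramII m) u l) :
    ∃ v, u = D • v := by
  obtain ⟨H, hH⟩ := gramII_inv m
  have : ∀ i, D ∣ u i := by
    intro i
    have := h (H.mulVec (Pi.single i 1))
    rw [bilin_dot, Matrix.mulVec_mulVec, hH, Matrix.one_mulVec] at this
    simpa using this
  choose v hv using this
  exact ⟨v, funext hv⟩

lemma gramL_bilin (m d : ℕ) (x y : IdxL m → ℤ) :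
    bilin (gramL m d) x y = bilin (gramII m) (x ∘ Sum.inl) (y ∘ Sum.inl)
      - 2 * d * x (Sum.inr 0) * y (Sum.inr 0) := by
  simp [bilin, gramL, Fintype.sum_sum_type]
  ring

lemma inStableO_iff {ι : Type} [Fintype ι] [DecidableEq ι] (G : Matrix ι ι ℤ)
    (g : (ι → ℤ) ≃ₗ[ℤ] (ι → ℤ)) : InStableO G g ↔ St (Matrix.toBilin' G) g := by
  have hQ : ∀ (N : ℚ) (y : ι → ℚ) (x l : ι → ℤ), N • y = castV x →
      N * bilinQ G y (castV l) = (bilin G x l : ℚ) := by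
    intro N y x l h
    simp only [bilin, bilinQ, Finset.mul_sum]
    push_cast
    refine Finset.sum_congr rfl fun i _ => Finset.sum_congr rfl fun j _ => ?_
    have : N * y i = x i := congrFun h i
    simp only [castV]
    rw [← this]; ring
  unfold InStableO St
  simp only [bilin_eq]
  refine and_congr_right fun _ => ⟨fun h N hN x hx => ?_, fun h y hy N x hx => ?_⟩
  · have hN' : (N : ℚ) ≠ 0 := by exact_mod_cast hN
    have e : (N : ℚ) • ((N : ℚ)⁻¹ • castV x) = castV x := by
      rw [smul_smul, mul_inv_cancel₀ hN', one_smul]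
    refine h ((N : ℚ)⁻¹ • castV x) (fun l => ?_) N x e
    obtain ⟨a, ha⟩ := hx l
    refine ⟨a, ?_⟩
    have := hQ _ _ x l e
    rw [ha] at this
    push_cast at this
    exact mul_left_cancel₀ hN' this
  · by_cases hN : N = 0
    · subst hN
      have : x = 0 := by
        funext i
        have := congrFun hx i
        simp [castV] at this
        exact_mod_cast this.symm
      exact ⟨0, by simp [this]⟩
    · refine h N hN x fun l => ?_
      obtain ⟨a, ha⟩ := hy l
      refine ⟨a, ?_⟩
      have := hQ _ _ x l hx
      rw [ha] at this
      exact_mod_cast this.symm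

/-- Basis vectors of the two hyperbolic planes. -/
def bv (m : ℕ) (i : Fin 2 ⊕ Fin 2) : IdxL m → ℤ := Pi.single (Sum.inl (Sum.inl i)) 1

lemma bv_bv (m d : ℕ) (i j : Fin 2 ⊕ Fin 2) :
    Matrix.toBilin' (gramL m d) (bv m i) (bv m j) = Matrix.fromBlocks gramU 0 0 gramU i j := by
  rw [bv, bv, Matrix.toBilin'_single]; rfl

/-- Representative vectors. -/
def rep (m d : ℕ) (y n : ℤ) : IdxL m → ℤ :=
  (2 * (d : ℤ)) • (bv m (Sum.inl 0) + n • bv m (Sum.inl 1)) + Pi.single (Sum.inr 0) (1 - 2 * y)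

lemma rep_inr (m d : ℕ) (y n : ℤ) : rep m d y n (Sum.inr 0) = 1 - 2 * y := by
  simp [rep, bv]

lemma rep_inl (m d : ℕ) (y n : ℤ) : rep m d y n ∘ Sum.inl =
    (2 * (d : ℤ)) • ((bv m (Sum.inl 0) + n • bv m (Sum.inl 1)) ∘ Sum.inl) := by
  ext i; simp [rep]; ring

lemma bilin_smul_left {ι : Type} [Fintype ι] (G : Matrix ι ι ℤ) (c : ℤ) (x y : ι → ℤ) :
    bilin G (c • x) y = c * bilin G x y := by
  classical
  simp only [← bilin_eq, map_smul, LinearMap.smul_apply, smul_eq_mul]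

lemma bilin_smul_right {ι : Type} [Fintype ι] (G : Matrix ι ι ℤ) (c : ℤ) (x y : ι → ℤ) :
    bilin G x (c • y) = c * bilin G x y := by
  classical
  simp only [← bilin_eq, map_smul, LinearMap.smul_apply, smul_eq_mul]

lemma hyp1 (m d : ℕ) : Hyp (Matrix.toBilin' (gramL m d)) (bv m (Sum.inl 0)) (bv m (Sum.inl 1)) := by
  constructor <;> rw [bv_bv] <;> simp [gramU]

lemma hyp2 (m d : ℕ) : Hyp (Matrix.toBilin' (gramL m d)) (bv m (Sum.inr 0)) (bv m (Sum.inr 1)) := by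
  constructor <;> rw [bv_bv] <;> simp [gramU]

/-- The set of vectors in question. -/
def goodSet (m d : ℕ) : Set (IdxL m → ℤ) :=
  {r | IsPrim r ∧ bilin (gramL m d) r r = -(2 * (d : ℤ)) ∧
          IsDivisorOf (gramL m d) r (2 * (d : ℤ))}

lemma rep_norm (m d : ℕ) {y n : ℤ} (h : y * y - y = d * n) :
    bilin (gramL m d) (rep m d y n) (rep m d y n) = -(2 * (d : ℤ)) := by
  have key : bilin (gramII m) ((bv m (Sum.inl 0) + n • bv m (Sum.inl 1)) ∘ Sum.inl)
      ((bv m (Sum.inl 0) + n • bv m (Sum.inl 1)) ∘ Sum.inl) = 2 * n := by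
    have h1 := gramL_bilin m d (bv m (Sum.inl 0) + n • bv m (Sum.inl 1))
      (bv m (Sum.inl 0) + n • bv m (Sum.inl 1))
    have h2 : (bv m (Sum.inl 0) + n • bv m (Sum.inl 1)) (Sum.inr 0) = 0 := by simp [bv]
    rw [h2] at h1
    have h3 : bilin (gramL m d) (bv m (Sum.inl 0) + n • bv m (Sum.inl 1))
      (bv m (Sum.inl 0) + n • bv m (Sum.inl 1)) = 2 * n := by
      rw [← bilin_eq]
      simp only [map_add, map_smul, LinearMap.add_apply, LinearMap.smul_apply, bv_bv]
      simp [gramU]; ring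
    linarith
  rw [gramL_bilin, rep_inr, rep_inl, bilin_smul_left, bilin_smul_right, key]
  linear_combination (-8 * (d : ℤ)) * h

lemma rep_mem (m d : ℕ) (hd : 1 < d) {y n : ℤ} (h : y * y - y = d * n) :
    rep m d y n ∈ goodSet m d := by
  have hn := rep_norm m d h
  have hf : bilin (gramL m d) (rep m d y n) (bv m (Sum.inl 1)) = 2 * d := by
    rw [← bilin_eq, rep, map_add, map_smul, map_add, map_smul]
    simp only [LinearMap.add_apply, LinearMap.smul_apply, bv_bv]
    rw [bilin_eq, gramL_bilin]
    have : (Pi.single (Sum.inr 0) (1 - 2 * y) : IdxL m → ℤ) ∘ Sum.inl = 0 := by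
      ext i; simp
    rw [this]
    simp [gramU, bv, bilin]
  refine ⟨?_, hn, by omega, ?_, ⟨_, hf⟩⟩
  · intro k x hx
    have d1 : k ∣ 2 * d := by
      rw [← hf, hx, bilin_smul_left]; exact Dvd.intro _ rfl
    have d2 : k ∣ 1 - 2 * y := by
      rw [← rep_inr m d y n, hx]; exact ⟨x (Sum.inr 0), rfl⟩
    apply isUnit_of_dvd_one
    have : (1 : ℤ) = (1 - 2 * y) * (1 - 2 * y) - (2 * d) * (2 * n) := by
      linear_combination -4 * h
    rw [this]
    exact dvd_sub (d2.mul_right _) (d1.mul_right _)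
  · intro l
    rw [gramL_bilin, rep_inl, bilin_smul_left]
    exact dvd_sub (Dvd.intro _ rfl) ⟨rep m d y n (Sum.inr 0) * l (Sum.inr 0), by ring⟩

lemma good_decomp (m d : ℕ) (hd : 1 < d) {r : IdxL m → ℤ} (hr : r ∈ goodSet m d) :
    ∃ (v : IdxII m → ℤ) (y n : ℤ), r ∘ Sum.inl = (2 * (d : ℤ)) • v ∧ r (Sum.inr 0) = 1 - 2 * y ∧
      y * y - y = d * n := by
  obtain ⟨-, hn, -, hdiv, -⟩ := hr
  obtain ⟨v, hv⟩ := gramII_dvd m (D := 2 * d) (u := r ∘ Sum.inl) (fun l => by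
    have := hdiv (Sum.elim l 0)
    rw [gramL_bilin] at this
    simpa using this)
  obtain ⟨A, hA⟩ := gramII_half m
  rw [gramL_bilin, hv, bilin_smul_left, bilin_smul_right, bilin_even hA] at hn
  obtain ⟨c, hc⟩ : ∃ c, c = r (Sum.inr 0) := ⟨_, rfl⟩
  obtain ⟨n, hn'⟩ : ∃ n, n = bilin A v v := ⟨_, rfl⟩
  rw [← hc, ← hn'] at hn
  have hD : (2 * (d : ℤ)) ≠ 0 := by omega
  have e : c * c = 1 + 4 * (d * n) := by
    apply mul_left_cancel₀ hD
    linear_combination -hn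
  have hodd : Odd c := by
    have : Odd (c * c) := by rw [e]; exact ⟨2 * (d * n), by ring⟩
    exact (Int.odd_mul.1 this).1
  obtain ⟨t, ht⟩ := hodd
  refine ⟨v, -t, n, hv, by rw [← hc, ht]; ring, ?_⟩
  rw [ht] at e
  linarith

lemma good_rel (m d : ℕ) (hd : 1 < d) {r r' : IdxL m → ℤ} (hr : r ∈ goodSet m d)
    (hr' : r' ∈ goodSet m d) (h : (2 * (d : ℤ)) ∣ r' (Sum.inr 0) - r (Sum.inr 0)) :
    ORel (Matrix.toBilin' (gramL m d)) r r' := by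
  obtain ⟨A, hA⟩ := gramL_half m d
  obtain ⟨v, y, n, hv, -, -⟩ := good_decomp m d hd hr
  obtain ⟨v', y', n', hv', -, -⟩ := good_decomp m d hd hr'
  obtain ⟨-, hn, hD, hdiv, hex⟩ := hr
  obtain ⟨-, hn', -, hdiv', hex'⟩ := hr'
  obtain ⟨c, hc⟩ := h
  refine eichler (fun x y => ?_) (fun x => ?_) (hyp1 m d) (hyp2 m d) ?_ ?_ ?_ ?_ hD ?_ ?_ ?_ ?_ ?_
    ⟨Sum.elim (v' - v) (fun _ => c), ?_⟩
  · rw [bilin_eq, bilin_eq, bilin_symm hA]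
  · exact ⟨_, by rw [bilin_eq, bilin_even hA]⟩
  · rw [bv_bv]; simp
  · rw [bv_bv]; simp
  · rw [bv_bv]; simp
  · rw [bv_bv]; simp
  · simpa only [bilin_eq] using hdiv
  · simpa only [bilin_eq] using hex
  · simpa only [bilin_eq] using hdiv'
  · simpa only [bilin_eq] using hex'
  · rw [bilin_eq, bilin_eq, hn, hn']
  · ext i
    rcases i with i | i
    · have h1 : r (Sum.inl i) = 2 * d * v i := congrFun hv i
      have h2 : r' (Sum.inl i) = 2 * d * v' i := congrFun hv' i
      simp [h1, h2]; ring
    · have : i = 0 := Subsingleton.elim _ _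
      subst this
      simpa using hc

lemma orbit_eq (m d : ℕ) (r : IdxL m → ℤ) :
    {r' | ∃ g : (IdxL m → ℤ) ≃ₗ[ℤ] (IdxL m → ℤ), InStableO (gramL m d) g ∧ g r = r'} =
      {r' | ORel (Matrix.toBilin' (gramL m d)) r r'} := by
  simp only [inStableO_iff]; rfl

/-- For `d > 1`, the number of orbits of `Õ(L_{2d}^{(m)})` on the set
of primitive vectors `r` with `(r,r) = −2d` and `div(r) = 2d` is exactly `2^{ρ(d)}`,
where `ρ(d)` is the number of distinct prime divisors of `d`. -/
theorem card_orbits_of_minus_two_d_vectors_divisor_two_d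
    (m d : ℕ) (hd : 1 < d) :
    Nat.card
      ↥(stableOrbits (gramL m d)
        {r | IsPrim r ∧ bilin (gramL m d) r r = -(2 * (d : ℤ)) ∧
          IsDivisorOf (gramL m d) r (2 * (d : ℤ))}) = 2 ^ d.primeFactors.card := by
  change Nat.card ↥(stableOrbits (gramL m d) (goodSet m d)) = _
  have : NeZero d := ⟨by omega⟩
  rw [← card_idem d (by omega)]
  symm
  have hex : ∀ y : {y : ZMod d // y * y = y}, ∃ n : ℤ, (y.1.val : ℤ) * y.1.val - y.1.val = d * n := by
    rintro ⟨y, hy⟩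
    have : (d : ℤ) ∣ (y.val : ℤ) * y.val - y.val := by
      rw [← ZMod.intCast_zmod_eq_zero_iff_dvd]
      push_cast
      rw [ZMod.natCast_zmod_val, hy, sub_self]
    exact this
  choose n hn using hex
  let F : {y : ZMod d // y * y = y} → ↥(stableOrbits (gramL m d) (goodSet m d)) := fun y =>
    ⟨{r' | ORel (Matrix.toBilin' (gramL m d)) (rep m d y.1.val (n y)) r'},
      rep m d y.1.val (n y), rep_mem m d hd (hn y), (orbit_eq m d _).symm⟩
  refine Nat.card_congr (Equiv.ofBijective F ⟨?_, ?_⟩)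
  · intro y z hyz
    have h1 : ORel (Matrix.toBilin' (gramL m d)) (rep m d y.1.val (n y)) (rep m d z.1.val (n z)) := by
      have : rep m d z.1.val (n z) ∈ (F z).1 := ORel.refl _
      rw [← hyz] at this
      exact this
    obtain ⟨l, hl⟩ := h1.sub (D := 2 * d) (by omega) (by
      simpa only [bilin_eq] using (rep_mem m d hd (hn y)).2.2.2.1)
    have h2 := congrFun hl (Sum.inr 0)
    rw [Pi.sub_apply, rep_inr, rep_inr, Pi.smul_apply, smul_eq_mul] at h2
    have h3 : (y.1.val : ℤ) - z.1.val = d * l (Sum.inr 0) := by linarith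
    have h4 : (((y.1.val : ℤ) - z.1.val : ℤ) : ZMod d) = 0 := by
      rw [ZMod.intCast_zmod_eq_zero_iff_dvd]; exact ⟨_, h3⟩
    push_cast at h4
    rw [ZMod.natCast_zmod_val, ZMod.natCast_zmod_val] at h4
    exact Subtype.ext (sub_eq_zero.1 h4)
  · rintro ⟨O, r, hr, rfl⟩
    obtain ⟨v, y, k, hv, hy, hk⟩ := good_decomp m d hd hr
    have hid : (y : ZMod d) * y = y := by
      have : ((y * y - y : ℤ) : ZMod d) = 0 := by
        rw [ZMod.intCast_zmod_eq_zero_iff_dvd]; exact ⟨_, hk⟩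
      push_cast at this
      exact sub_eq_zero.1 this
    refine ⟨⟨(y : ZMod d), hid⟩, Subtype.ext ?_⟩
    have hrel := good_rel m d hd (rep_mem m d hd (hn ⟨(y : ZMod d), hid⟩)) hr (by
      rw [rep_inr, hy]
      have : (d : ℤ) ∣ ((y : ZMod d).val : ℤ) - y := by
        rw [← ZMod.intCast_zmod_eq_zero_iff_dvd]
        push_cast
        rw [ZMod.natCast_zmod_val, sub_self]
      obtain ⟨t, ht⟩ := this
      exact ⟨t, by linear_combination 2 * ht⟩)
    refine Eq.trans ?_ (orbit_eq m d r).symm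
    ext s
    exact ⟨fun h => hrel.symm.trans h, fun h => hrel.trans h⟩
end
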